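/- Among all graphs in Cact(n;t) with n ≥ 25 and t ≥ 1, the cactus with the third-minimum degree resistance distance is G4; that is, for every G ∈ Cact(n;t) with G not isomorphic to G⁰(n,t) or to G5, it holds that D_R(G) ≥ D_R(G4), with equality if and only if G is isomorphic to G4. -/

import Mathlib

open Finset

/-- Effective resistance between two vertices of a graph (for a connected graph
this is the effective resistance when every edge is a unit resistor), defined via
the matrix-tree / spanning-two-forest determinant formula. -/
noncomputable def effRes {V : Type*} [Finite V] (G : SimpleGraph V) (u v : V) : ℝ :=
  letI := Fintype.ofFinite V
  letI := Classical.decEq V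
  letI : DecidableRel G.Adj := Classical.decRel _
  if u = v then 0
  else
    Matrix.det ((G.lapMatrix ℝ).submatrix
        (fun w : {w : V // w ≠ u ∧ w ≠ v} => (w : V)) (fun w => (w : V)))
      / Matrix.det ((G.lapMatrix ℝ).submatrix
        (fun w : {w : V // w ≠ u} => (w : V)) (fun w => (w : V)))

/-- The degree resistance distance `D_R(G) = Σ_{ {u,v} ⊆ V } (d(u)+d(v)) R(u,v)`. -/
noncomputable def degRes {V : Type*} [Finite V] (G : SimpleGraph V) : ℝ :=
  letI := Fintype.ofFinite V
  letI := Classical.decEq V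
  letI : DecidableRel G.Adj := Classical.decRel _
  (1 / 2) * ∑ u : V, ∑ v : V, ((G.degree u : ℝ) + (G.degree v : ℝ)) * effRes G u v

/-- The Kirchhoff index `Kf(G) = Σ_{ {u,v} ⊆ V } R(u,v)`. -/
noncomputable def kirchhoffIndex {V : Type*} [Finite V] (G : SimpleGraph V) : ℝ :=
  letI := Fintype.ofFinite V
  (1 / 2) * ∑ u : V, ∑ v : V, effRes G u v

/-- `Kf_v(G) = Σ_{u ∈ V} R(u,v)`. -/
noncomputable def Kfv {V : Type*} [Finite V] (G : SimpleGraph V) (v : V) : ℝ :=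
  letI := Fintype.ofFinite V
  ∑ u : V, effRes G u v

/-- `D_v(G) = Σ_{u ∈ V} d(u) R(u,v)`. -/
noncomputable def Dv {V : Type*} [Finite V] (G : SimpleGraph V) (v : V) : ℝ :=
  letI := Fintype.ofFinite V
  letI := Classical.decEq V
  letI : DecidableRel G.Adj := Classical.decRel _
  ∑ u : V, (G.degree u : ℝ) * effRes G u v

/-- A subgraph is a cycle if it is connected and `2`-regular. -/
def IsCycleSubgraph {V : Type*} {G : SimpleGraph V} (H : G.Subgraph) : Prop :=
  H.coe.Connected ∧ ∀ v ∈ H.verts, {u | H.Adj v u}.ncard = 2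

/-- A cactus is a connected graph in which any two distinct cycles share at most
one vertex (equivalently, every block is an edge or a cycle). -/
def IsCactus {V : Type*} (G : SimpleGraph V) : Prop :=
  G.Connected ∧ ∀ H₁ H₂ : G.Subgraph, IsCycleSubgraph H₁ → IsCycleSubgraph H₂ →
    H₁ ≠ H₂ → (H₁.verts ∩ H₂.verts).ncard ≤ 1

/-- The number of cycles of a graph. -/
noncomputable def numCycles {V : Type*} (G : SimpleGraph V) : ℕ :=
  {H : G.Subgraph | IsCycleSubgraph H}.ncard

/-- `G ∈ Cact(n;t)`: `G` is a cactus with `n` vertices and `t` cycles. -/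
def MemCact {V : Type*} (n t : ℕ) (G : SimpleGraph V) : Prop :=
  IsCactus G ∧ Nat.card V = n ∧ numCycles G = t

/-- `G⁰(n,t)`: `t` triangles (on vertices `2i+1, 2i+2`, `i < t`) and `n - 2t - 1`
pendent edges, all sharing the common vertex `0`. -/
def G0 (n t : ℕ) : SimpleGraph (Fin n) :=
  SimpleGraph.fromRel (fun a b =>
    a.val = 0 ∨ (Odd a.val ∧ b.val = a.val + 1 ∧ b.val ≤ 2 * t))

/-- `G3`: `t` triangles, `n - 2t - 3` pendent edges, and one pendent path of
length 2 (through `2t+1` to `2t+2`), all attached at the common vertex `0`. -/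
def G3g (n t : ℕ) : SimpleGraph (Fin n) :=
  SimpleGraph.fromRel (fun a b =>
    (a.val = 0 ∧ b.val ≠ 2 * t + 2) ∨
    (Odd a.val ∧ b.val = a.val + 1 ∧ b.val ≤ 2 * t) ∨
    (a.val = 2 * t + 1 ∧ b.val = 2 * t + 2))

/-- `G4`: `t` triangles and `n - 2t - 2` pendent edges at the common vertex `0`,
together with one pendent edge (to `2t+1`) attached at the triangle vertex `1`. -/
def G4g (n t : ℕ) : SimpleGraph (Fin n) :=
  SimpleGraph.fromRel (fun a b =>
    (a.val = 0 ∧ b.val ≠ 2 * t + 1) ∨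
    (Odd a.val ∧ b.val = a.val + 1 ∧ b.val ≤ 2 * t) ∨
    (a.val = 1 ∧ b.val = 2 * t + 1))

/-- `G5`: `t - 1` triangles, one quadrilateral `C₄` (on `0, 2t-1, 2t, 2t+1`), and
`n - 2t - 2` pendent edges, all sharing the common vertex `0`. -/
def G5g (n t : ℕ) : SimpleGraph (Fin n) :=
  SimpleGraph.fromRel (fun a b =>
    (a.val = 0 ∧ b.val ≠ 2 * t) ∨
    (Odd a.val ∧ b.val = a.val + 1 ∧ b.val ≤ 2 * t - 2) ∨
    (a.val = 2 * t - 1 ∧ b.val = 2 * t) ∨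
    (a.val = 2 * t ∧ b.val = 2 * t + 1))

/-- `G6`: `t - 1` triangles, one quadrilateral `C₄` (on `0, 2t-1, 2t, 2t+1`), and
`n - 2t - 3` pendent edges at the common vertex `0`, together with one pendent edge
(to `2t+2`) attached at the quadrilateral vertex `2t-1`, which is adjacent to `0`. -/
def G6g (n t : ℕ) : SimpleGraph (Fin n) :=
  SimpleGraph.fromRel (fun a b =>
    (a.val = 0 ∧ b.val ≠ 2 * t ∧ b.val ≠ 2 * t + 2) ∨
    (Odd a.val ∧ b.val = a.val + 1 ∧ b.val ≤ 2 * t - 2) ∨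
    (a.val = 2 * t - 1 ∧ (b.val = 2 * t ∨ b.val = 2 * t + 2)) ∨
    (a.val = 2 * t ∧ b.val = 2 * t + 1))

/-- `G7`: `t - 1` triangles, one quadrilateral `C₄` (on `0, 2t-1, 2t, 2t+1`), and
`n - 2t - 3` pendent edges at the common vertex `0`, together with one pendent edge
(to `2t+2`) attached at the quadrilateral vertex `2t`, which is opposite to `0`. -/
def G7g (n t : ℕ) : SimpleGraph (Fin n) :=
  SimpleGraph.fromRel (fun a b =>
    (a.val = 0 ∧ b.val ≠ 2 * t ∧ b.val ≠ 2 * t + 2) ∨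
    (Odd a.val ∧ b.val = a.val + 1 ∧ b.val ≤ 2 * t - 2) ∨
    (a.val = 2 * t - 1 ∧ b.val = 2 * t) ∨
    (a.val = 2 * t ∧ (b.val = 2 * t + 1 ∨ b.val = 2 * t + 2)))

/-- `G8`: `t - 2` triangles, two quadrilaterals `C₄` (on `0, 2t-3, 2t-2, 2t-1` and
on `0, 2t, 2t+1, 2t+2`), and `n - 2t - 3` pendent edges, all sharing the common
vertex `0`. -/
def G8g (n t : ℕ) : SimpleGraph (Fin n) :=
  SimpleGraph.fromRel (fun a b =>
    (a.val = 0 ∧ b.val ≠ 2 * t - 2 ∧ b.val ≠ 2 * t + 1) ∨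
    (Odd a.val ∧ b.val = a.val + 1 ∧ b.val ≤ 2 * t - 4) ∨
    (a.val = 2 * t - 3 ∧ b.val = 2 * t - 2) ∨
    (a.val = 2 * t - 2 ∧ b.val = 2 * t - 1) ∨
    (a.val = 2 * t ∧ b.val = 2 * t + 1) ∨
    (a.val = 2 * t + 1 ∧ b.val = 2 * t + 2))

/-- `G9`: `t - 1` triangles, one quadrilateral `C₄` (on `0, 2t-1, 2t, 2t+1`), and
`n - 2t - 3` pendent edges at the common vertex `0`, together with one pendent edge
(to `2t+2`) attached at the non-central triangle vertex `1`. -/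
def G9g (n t : ℕ) : SimpleGraph (Fin n) :=
  SimpleGraph.fromRel (fun a b =>
    (a.val = 0 ∧ b.val ≠ 2 * t ∧ b.val ≠ 2 * t + 2) ∨
    (Odd a.val ∧ b.val = a.val + 1 ∧ b.val ≤ 2 * t - 2) ∨
    (a.val = 2 * t - 1 ∧ b.val = 2 * t) ∨
    (a.val = 2 * t ∧ b.val = 2 * t + 1) ∨
    (a.val = 1 ∧ b.val = 2 * t + 2))

/-- `G10`: `t - 1` triangles, one pentagon `C₅` (on `0, 2t-1, 2t, 2t+1, 2t+2`), and
`n - 2t - 3` pendent edges, all sharing the common vertex `0`. -/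
def G10g (n t : ℕ) : SimpleGraph (Fin n) :=
  SimpleGraph.fromRel (fun a b =>
    (a.val = 0 ∧ b.val ≠ 2 * t ∧ b.val ≠ 2 * t + 1) ∨
    (Odd a.val ∧ b.val = a.val + 1 ∧ b.val ≤ 2 * t - 2) ∨
    (a.val = 2 * t - 1 ∧ b.val = 2 * t) ∨
    (a.val = 2 * t ∧ b.val = 2 * t + 1) ∨
    (a.val = 2 * t + 1 ∧ b.val = 2 * t + 2))


namespace CactusDR

open Matrix in
lemma lap_minor_det_ne_zero {V : Type*} [Fintype V] [DecidableEq V] (G : SimpleGraph V)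
    [DecidableRel G.Adj] (hG : G.Connected) (u : V) :
    Matrix.det ((G.lapMatrix ℝ).submatrix
        (fun w : {w : V // w ≠ u} => (w : V)) (fun w => (w : V))) ≠ 0 := by
  intro h0
  obtain ⟨x, hx0, hx⟩ := Matrix.exists_mulVec_eq_zero_iff.mpr h0
  apply hx0
  set y : V → ℝ := fun w => if h : w ≠ u then x ⟨w, h⟩ else 0 with hy
  have hyu : y u = 0 := by simp [hy]
  have hyx : ∀ w : {w : V // w ≠ u}, y w = x w := by
    intro w; simp [hy, w.2]
  have hLy : ∀ w, w ≠ u → (G.lapMatrix ℝ *ᵥ y) w = 0 := by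
    intro w hw
    have := congrFun hx ⟨w, hw⟩
    simp only [mulVec, dotProduct, submatrix_apply, Pi.zero_apply] at this ⊢
    rw [← this, ← Fintype.sum_subtype_add_sum_subtype (fun w => w ≠ u)]
    have h2 : ∑ i : {x // ¬ x ≠ u}, G.lapMatrix ℝ w i * y i = 0 := by
      apply Finset.sum_eq_zero
      rintro ⟨i, hi⟩ _
      push Not at hi
      subst hi
      simp [hyu]
    rw [h2, add_zero]
    exact Finset.sum_congr rfl fun i _ => by rw [hyx]
  have hz : toLinearMap₂' ℝ (G.lapMatrix ℝ) y y = 0 := by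
    rw [toLinearMap₂'_apply']
    simp only [dotProduct]
    apply Finset.sum_eq_zero
    intro w _
    by_cases hw : w = u
    · subst hw; simp [hyu]
    · simp [hLy w hw]
  rw [G.lapMatrix_toLinearMap₂'_apply'_eq_zero_iff_forall_reachable] at hz
  funext w
  rw [← hyx w, hz w u (hG.preconnected _ _), hyu]; rfl

open Matrix in
lemma effRes_eq {V : Type*} [Fintype V] [DecidableEq V] (G : SimpleGraph V)
    [DecidableRel G.Adj] (hG : G.Connected) (R : V → V → ℝ) (R0 : ∀ v, R v v = 0)
    (Rs : ∀ u v, R u v = R v u) (τ : V → ℝ)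
    (hL : ∀ v w, ∑ w' ∈ G.neighborFinset w, (R w v - R w' v) = τ w - if w = v then 2 else 0)
    (u v : V) : effRes G u v = R u v := by
  have hdef : effRes G u v = if u = v then 0
      else
        Matrix.det ((G.lapMatrix ℝ).submatrix
            (fun w : {w : V // w ≠ u ∧ w ≠ v} => (w : V)) (fun w => (w : V)))
          / Matrix.det ((G.lapMatrix ℝ).submatrix
            (fun w : {w : V // w ≠ u} => (w : V)) (fun w => (w : V))) := by
    unfold effRes
    congr! 
  rw [hdef]
  split_ifs with huv
  · rw [huv, R0]
  set A : Matrix {w : V // w ≠ u} {w : V // w ≠ u} ℝ := ((G.lapMatrix ℝ).submatrix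
            (fun w : {w : V // w ≠ u} => (w : V)) (fun w => (w : V))) with hA
  have hdet : A.det ≠ 0 := lap_minor_det_ne_zero G hG u
  rw [div_eq_iff hdet]
  set φ : V → ℝ := fun w => (R w u - R w v + R u v) / 2 with hφ
  have hLφ : ∀ w, (G.lapMatrix ℝ *ᵥ φ) w = (if w = v then 1 else 0) - if w = u then 1 else 0 := by
    intro w
    rw [G.lapMatrix_mulVec_apply, ← nsmul_eq_mul, ← G.card_neighborFinset_eq_degree,
      ← Finset.sum_const, ← Finset.sum_sub_distrib]
    have h1 := hL u w
    have h2 := hL v w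
    have : ∑ x ∈ G.neighborFinset w, (φ w - φ x) =
      ((∑ w' ∈ G.neighborFinset w, (R w u - R w' u)) -
        ∑ w' ∈ G.neighborFinset w, (R w v - R w' v)) / 2 := by
      rw [← Finset.sum_sub_distrib, Finset.sum_div]
      exact Finset.sum_congr rfl fun x _ => by simp only [hφ]; ring
    rw [this, h1, h2]
    split_ifs <;> ring
  have hφu : φ u = 0 := by simp [hφ, R0]
  have hφv : φ v = R u v := by simp [hφ, R0, Rs v u]
  set v' : {w : V // w ≠ u} := ⟨v, Ne.symm huv⟩ with hv'
  have hAφ : A *ᵥ (fun w => φ w) = Pi.single v' 1 := by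
    funext w
    have h1 := hLφ w
    simp only [mulVec, dotProduct, submatrix_apply, hA] at h1 ⊢
    rw [← Fintype.sum_subtype_add_sum_subtype (fun w => w ≠ u)] at h1
    have h2 : ∑ i : {x // ¬ x ≠ u}, G.lapMatrix ℝ w i * φ i = 0 := by
      apply Finset.sum_eq_zero
      rintro ⟨i, hi⟩ _
      push Not at hi
      subst hi
      simp [hφu]
    rw [h2, add_zero, if_neg w.2, sub_zero] at h1
    rw [h1, Pi.single_apply]
    simp [hv', Subtype.ext_iff]
  have hcr : A.adjugate v' v' = A.det * R u v := by
    have h := congrArg (fun z => (A.adjugate *ᵥ z) v') hAφ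
    simp only [mulVec_mulVec, adjugate_mul, smul_mulVec, one_mulVec, Pi.smul_apply,
      mulVec_single_one, smul_eq_mul, col_apply] at h
    rw [← h]
    simp [hv', hφv]
  rw [mul_comm, ← hcr, adjugate_apply]
  rw [twoBlockTriangular_det _ (fun w => w ≠ v')]
  · have h1 : (toSquareBlockProp (A.updateRow v' (Pi.single v' 1)) fun i => ¬ i ≠ v').det = 1 := by
      have : Unique {i // ¬ i ≠ v'} := ⟨⟨⟨v', by simp⟩⟩, fun x => by
        obtain ⟨x, hx⟩ := x; push Not at hx; exact Subtype.ext hx⟩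
      rw [det_unique]
      have h := (default : {i // ¬ i ≠ v'}).2
      push Not at h
      simp [toSquareBlockProp, h]
    rw [h1, mul_one]
    let e : {w : V // w ≠ u ∧ w ≠ v} ≃ {w : {w : V // w ≠ u} // w ≠ v'} :=
      { toFun := fun w => ⟨⟨w.1, w.2.1⟩, fun h => w.2.2 (congrArg Subtype.val h)⟩
        invFun := fun w => ⟨w.1.1, w.1.2, fun h => w.2 (Subtype.ext h)⟩
        left_inv := fun _ => rfl
        right_inv := fun _ => rfl }
    rw [← det_submatrix_equiv_self e]
    congr 1
    ext i j
    simp only [submatrix_apply, toSquareBlockProp, of_apply]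
    rw [toBlock_apply, updateRow_ne]
    · rfl
    · exact (e i).2
  · intro i hi j hj
    push Not at hi
    subst hi
    simp [hj]

end CactusDR

set_option linter.unusedSectionVars false
set_option linter.unusedVariables false

namespace CactusDR

/-- A block (bridge when `k = 2`, cycle of length `k` when `k ≥ 3`) of `G`, with its vertices
`s i`, and the projection `π` of the vertices of `G` onto it. -/
structure Blk {V : Type*} (G : SimpleGraph V) where
  k : ℕ
  two_le : 2 ≤ k
  s : ZMod k → V
  π : V → ZMod k
  πs : ∀ i, π (s i) = i
  adj : ∀ i, G.Adj (s i) (s (i + 1))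
  edge : ∀ u v, G.Adj u v → π u ≠ π v → s (π u) = u ∧ (π v = π u + 1 ∨ π v = π u - 1)

instance Blk.neZero {V : Type*} {G : SimpleGraph V} (b : Blk G) : NeZero b.k :=
  ⟨by have := b.two_le; omega⟩

/-- resistance in a block of size `k` between vertices with difference `d` -/
noncomputable def res (k : ℕ) (d : ZMod k) : ℝ :=
  (if k = 2 then 2 else 1) * ((d.val : ℝ) * (k - d.val) / k)

lemma res_natCast (k : ℕ) (hk : 2 ≤ k) (a : ℕ) (ha : a ≤ k) :
    res k (a : ZMod k) = (if k = 2 then 2 else 1) * ((a : ℝ) * (k - a) / k) := by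
  unfold res
  rw [ZMod.val_natCast]
  rcases ha.lt_or_eq with h | h
  · rw [Nat.mod_eq_of_lt h]
  · subst h; simp

lemma res_neg (k : ℕ) (hk : 2 ≤ k) (d : ZMod k) : res k (-d) = res k d := by
  have : NeZero k := ⟨by omega⟩
  obtain ⟨a, ha, rfl⟩ : ∃ a : ℕ, a < k ∧ d = (a : ZMod k) :=
    ⟨d.val, d.val_lt, by simp⟩
  have : -(a : ZMod k) = ((k - a : ℕ) : ZMod k) := by
    rw [Nat.cast_sub ha.le]; simp
  rw [this, res_natCast k hk _ (by omega), res_natCast k hk _ ha.le, Nat.cast_sub ha.le]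
  ring

lemma res_zero (k : ℕ) : res k 0 = 0 := by simp [res]

lemma res_lap0 (k : ℕ) (hk : 2 ≤ k) (d : ZMod k) :
    2 * res k d - res k (d + 1) - res k (d - 1)
      = (if k = 2 then 2 else 1) * (2 / k - if d = 0 then 2 else 0) := by
  have : NeZero k := ⟨by omega⟩
  have hk0 : (k : ℝ) ≠ 0 := by exact_mod_cast (by omega : k ≠ 0)
  obtain ⟨a, ha, rfl⟩ : ∃ a : ℕ, a < k ∧ d = (a : ZMod k) :=
    ⟨d.val, d.val_lt, by simp⟩
  rcases Nat.eq_zero_or_pos a with h0 | h0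
  · subst h0
    have h1 : ((0 : ℕ) : ZMod k) + 1 = ((1 : ℕ) : ZMod k) := by simp
    have h2 : ((0 : ℕ) : ZMod k) - 1 = ((k - 1 : ℕ) : ZMod k) := by
      rw [Nat.cast_sub (by omega)]; simp
    rw [h1, h2, res_natCast k hk _ (by omega), res_natCast k hk _ (by omega),
      res_natCast k hk _ (by omega), Nat.cast_sub (by omega)]
    simp
    split_ifs <;> field_simp <;> ring
  · have h1 : (a : ZMod k) + 1 = ((a + 1 : ℕ) : ZMod k) := by simp
    have h2 : (a : ZMod k) - 1 = ((a - 1 : ℕ) : ZMod k) := by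
      rw [Nat.cast_sub (by omega)]; simp
    have h3 : (a : ZMod k) ≠ 0 := by
      intro h
      rw [ZMod.natCast_eq_zero_iff] at h
      exact absurd (Nat.le_of_dvd h0 h) (by omega)
    rw [h1, h2, res_natCast k hk _ (by omega), res_natCast k hk _ (by omega),
      res_natCast k hk _ (by omega), Nat.cast_sub (by omega), if_neg h3]
    push_cast
    field_simp
    ring

lemma two_ne_zero_zmod (k : ℕ) (hk : 3 ≤ k) (i : ZMod k) : i + 1 ≠ i - 1 := by
  intro h
  have h2 : ((2 : ℕ) : ZMod k) = 0 := by
    push_cast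
    linear_combination h
  rw [ZMod.natCast_eq_zero_iff] at h2
  exact absurd (Nat.le_of_dvd (by norm_num) h2) (by omega)

lemma add_eq_sub_zmod2 (i : ZMod 2) : i + 1 = i - 1 := by revert i; decide

lemma res_lap (k : ℕ) (hk : 2 ≤ k) (i l : ZMod k) :
    ∑ j ∈ ({i + 1, i - 1} : Finset (ZMod k)), (res k (i - l) - res k (j - l))
      = 2 / k - if i = l then 2 else 0 := by
  have h := res_lap0 k hk (i - l)
  rw [show i - l + 1 = i + 1 - l by ring, show i - l - 1 = i - 1 - l by ring] at h
  rcases eq_or_ne k 2 with h2 | h2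
  · subst h2
    have e := add_eq_sub_zmod2 i
    rw [← e] at h
    rw [← e, Finset.pair_eq_singleton, Finset.sum_singleton]
    simp only [sub_eq_zero, if_true] at h
    linarith
  · rw [Finset.sum_pair (two_ne_zero_zmod k (by omega) i)]
    rw [if_neg h2] at h
    simp only [sub_eq_zero] at h
    linarith

lemma card_pair (k : ℕ) (hk : 2 ≤ k) (i : ZMod k) :
    ∑ j ∈ ({i + 1, i - 1} : Finset (ZMod k)), (1 : ℝ) = if k = 2 then 1 else 2 := by
  split_ifs with h2
  · subst h2
    rw [← add_eq_sub_zmod2 i, Finset.pair_eq_singleton, Finset.sum_singleton]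
  · rw [Finset.sum_pair (two_ne_zero_zmod k (by omega) i)]
    norm_num

section

variable {V : Type*} [Fintype V] [DecidableEq V] {G : SimpleGraph V} [DecidableRel G.Adj]

lemma add_one_ne_zmod (k : ℕ) (hk : 2 ≤ k) (i : ZMod k) : i + 1 ≠ i := by
  intro h
  have h2 : ((1 : ℕ) : ZMod k) = 0 := by
    push_cast
    linear_combination h
  rw [ZMod.natCast_eq_zero_iff] at h2
  exact absurd (Nat.le_of_dvd (by norm_num) h2) (by omega)

lemma Blk.sum_nbr (b : Blk G) (v : V) (f : ZMod b.k → ℝ) (hf : f (b.π v) = 0) :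
    ∑ w ∈ G.neighborFinset v, f (b.π w) =
      if b.s (b.π v) = v then ∑ j ∈ ({b.π v + 1, b.π v - 1} : Finset (ZMod b.k)), f j else 0 := by
  have hs : Function.Injective b.s := fun i j h => by rw [← b.πs i, h, b.πs]
  split_ifs with h
  · have h1 : ∑ j ∈ ({b.π v + 1, b.π v - 1} : Finset (ZMod b.k)), f j =
        ∑ w ∈ ({b.π v + 1, b.π v - 1} : Finset (ZMod b.k)).image b.s, f (b.π w) := by
      rw [Finset.sum_image fun x _ y _ hxy => hs hxy]
      exact Finset.sum_congr rfl fun j _ => by rw [b.πs]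
    rw [h1]
    symm
    apply Finset.sum_subset
    · intro w hw
      rw [SimpleGraph.mem_neighborFinset]
      simp only [Finset.mem_image, Finset.mem_insert, Finset.mem_singleton] at hw
      obtain ⟨j, rfl | rfl, rfl⟩ := hw
      · have := b.adj (b.π v); rwa [h] at this
      · have := b.adj (b.π v - 1); rw [sub_add_cancel, h] at this; exact this.symm
    · intro w hw hw'
      rw [SimpleGraph.mem_neighborFinset] at hw
      by_cases hπ : b.π v = b.π w
      · rw [← hπ, hf]
      · exfalso
        apply hw'
        have h3 := b.edge v w hw hπ
        have h4 := b.edge w v hw.symm (Ne.symm hπ)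
        simp only [Finset.mem_image, Finset.mem_insert, Finset.mem_singleton]
        exact ⟨b.π w, h3.2, h4.1⟩
  · apply Finset.sum_eq_zero
    intro w hw
    rw [SimpleGraph.mem_neighborFinset] at hw
    by_cases hπ : b.π v = b.π w
    · rw [← hπ, hf]
    · exact absurd (b.edge v w hw hπ).1 h

/-- every edge lies in exactly one block of the family -/
def Cover {β : Type*} (B : β → Blk G) : Prop :=
  ∀ u v, G.Adj u v → ∃! b, (B b).π u ≠ (B b).π v

variable {β : Type*} [Fintype β] (B : β → Blk G)

lemma cnt_eq (hc : Cover B) (hG : G.Connected) (u v w : V) :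
    (∑ b, if (B b).s ((B b).π u) = w then (1 : ℝ) else 0) - (if u = w then 1 else 0)
      = (∑ b, if (B b).s ((B b).π v) = w then (1 : ℝ) else 0) - (if v = w then 1 else 0) := by
  classical
  have key : ∀ u v, G.Adj u v →
    (∑ b, if (B b).s ((B b).π u) = w then (1 : ℝ) else 0) - (if u = w then 1 else 0)
      = (∑ b, if (B b).s ((B b).π v) = w then (1 : ℝ) else 0) - (if v = w then 1 else 0) := by
    intro u v huv
    obtain ⟨b0, hb0, hb⟩ := hc u v huv
    rw [← Finset.add_sum_erase univ (fun b => if (B b).s ((B b).π u) = w then (1 : ℝ) else 0)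
        (Finset.mem_univ b0),
      ← Finset.add_sum_erase univ (fun b => if (B b).s ((B b).π v) = w then (1 : ℝ) else 0)
        (Finset.mem_univ b0)]
    rw [((B b0).edge u v huv hb0).1, ((B b0).edge v u huv.symm (Ne.symm hb0)).1]
    have : ∑ b ∈ univ.erase b0, (if (B b).s ((B b).π u) = w then (1 : ℝ) else 0)
      = ∑ b ∈ univ.erase b0, (if (B b).s ((B b).π v) = w then (1 : ℝ) else 0) := by
      apply Finset.sum_congr rfl
      intro b hbb
      have : (B b).π u = (B b).π v := by
        by_contra h
        exact (Finset.ne_of_mem_erase hbb) (hb b h)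
      rw [this]
    rw [this]
    ring
  obtain ⟨p⟩ := hG.preconnected u v
  induction p with
  | nil => rfl
  | cons h _ ih => rw [key _ _ h, ih]

/-- sum of the resistances over the blocks -/
noncomputable def RR (u v : V) : ℝ := ∑ b, res (B b).k ((B b).π u - (B b).π v)

lemma effRes_blk (hc : Cover B) (hG : G.Connected) (u v : V) : effRes G u v = RR B u v := by
  apply effRes_eq G hG (RR B) (τ := fun w =>
    (∑ b, if (B b).s ((B b).π w) = w then (2 : ℝ) / (B b).k else 0)
      - 2 * (∑ b, if (B b).s ((B b).π w) = w then (1 : ℝ) else 0) + 2)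
  · intro v; simp [RR, res_zero]
  · intro u v
    unfold RR
    apply Finset.sum_congr rfl
    intro b _
    rw [← res_neg _ (B b).two_le]
    congr 1
    ring
  · intro v w
    have h1 : ∑ w' ∈ G.neighborFinset w, (RR B w v - RR B w' v) =
        ∑ b, ((if (B b).s ((B b).π w) = w then (2 : ℝ) / (B b).k else 0)
          - 2 * if (B b).s ((B b).π v) = w then (1 : ℝ) else 0) := by
      unfold RR
      simp_rw [← Finset.sum_sub_distrib]
      rw [Finset.sum_comm]
      apply Finset.sum_congr rfl
      intro b _
      rw [(B b).sum_nbr w (fun j => res (B b).k ((B b).π w - (B b).π v)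
        - res (B b).k (j - (B b).π v)) (by simp)]
      rw [res_lap _ (B b).two_le]
      by_cases h : (B b).s ((B b).π w) = w
      · rw [if_pos h, if_pos h]
        by_cases h2 : (B b).π w = (B b).π v
        · rw [if_pos h2, ← h2, if_pos h]; ring
        · have : (B b).s ((B b).π v) ≠ w := by
            intro h3; apply h2; rw [← h3, (B b).πs]
          rw [if_neg h2, if_neg this]; ring
      · have : (B b).s ((B b).π v) ≠ w := by
            intro h3; apply h; rw [← h3, (B b).πs]
        rw [if_neg h, if_neg h, if_neg this]; ring
    rw [h1, Finset.sum_sub_distrib, ← Finset.mul_sum]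
    have := cnt_eq B hc hG v w w
    rw [if_pos rfl] at this
    have h5 : (if w = v then (2 : ℝ) else 0) = 2 * if v = w then 1 else 0 := by
      by_cases h : v = w
      · simp [h]
      · simp [h, Ne.symm h]
    rw [h5]
    linarith

/-- degree inside a block -/
noncomputable def Blk.dB (b : Blk G) : ℝ := if b.k = 2 then 1 else 2

lemma degree_blk (hc : Cover B) (v : V) :
    (G.degree v : ℝ) = ∑ b, if (B b).s ((B b).π v) = v then (B b).dB else 0 := by
  classical
  have h1 : ∀ w ∈ G.neighborFinset v, (1 : ℝ) =
      ∑ b, if (B b).π w = (B b).π v then 0 else 1 := by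
    intro w hw
    rw [SimpleGraph.mem_neighborFinset] at hw
    obtain ⟨b0, hb0, hb⟩ := hc v w hw
    rw [Finset.sum_eq_single b0]
    · rw [if_neg (Ne.symm hb0)]
    · intro b _ hbb
      rw [if_pos]
      by_contra h
      exact hbb (hb b (Ne.symm h))
    · simp
  rw [← G.card_neighborFinset_eq_degree, Finset.card_eq_sum_ones]
  push_cast
  rw [Finset.sum_congr rfl h1, Finset.sum_comm]
  apply Finset.sum_congr rfl
  intro b _
  rw [(B b).sum_nbr v (fun j => if j = (B b).π v then 0 else 1) (by simp)]
  have : ∑ j ∈ ({(B b).π v + 1, (B b).π v - 1} : Finset (ZMod (B b).k)),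
      (if j = (B b).π v then (0 : ℝ) else 1) = (B b).dB := by
    unfold Blk.dB
    rw [← card_pair _ (B b).two_le ((B b).π v)]
    apply Finset.sum_congr rfl
    intro j hj
    rw [if_neg]
    simp only [Finset.mem_insert, Finset.mem_singleton] at hj
    rcases hj with rfl | rfl
    · exact add_one_ne_zmod _ (B b).two_le _
    · intro h
      exact add_one_ne_zmod _ (B b).two_le ((B b).π v) (by nth_rw 1 [← h]; ring)
  rw [this]

lemma Blk.sum_fix (b : Blk G) : ∑ v, (if b.s (b.π v) = v then (1 : ℝ) else 0) = b.k := by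
  have hs : Function.Injective b.s := fun i j h => by rw [← b.πs i, h, b.πs]
  rw [Finset.sum_boole]
  have : (univ.filter fun v => b.s (b.π v) = v) = univ.image b.s := by
    ext v
    simp only [Finset.mem_filter, Finset.mem_univ, true_and, Finset.mem_image]
    constructor
    · intro h; exact ⟨_, h⟩
    · rintro ⟨i, rfl⟩; rw [b.πs]
  rw [this, Finset.card_image_of_injective _ hs, Finset.card_univ, ZMod.card]

lemma sum_degree_blk (hc : Cover B) :
    ∑ v, (G.degree v : ℝ) = ∑ b, (B b).k * (B b).dB := by
  simp_rw [degree_blk B hc]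
  rw [Finset.sum_comm]
  apply Finset.sum_congr rfl
  intro b _
  rw [← (B b).sum_fix, Finset.sum_mul]
  apply Finset.sum_congr rfl
  intro v _
  split_ifs <;> ring

lemma sum_k_blk (hc : Cover B) (hG : G.Connected) :
    ∑ b, ((B b).k - 1 : ℝ) = Fintype.card V - 1 := by
  obtain ⟨r⟩ := hG.nonempty
  have h1 : ∀ w, (∑ b, if (B b).s ((B b).π w) = w then (1 : ℝ) else 0) =
    (∑ b, if (B b).s ((B b).π r) = w then (1 : ℝ) else 0) + 1 - (if r = w then 1 else 0) := by
    intro w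
    have := cnt_eq B hc hG w r w
    rw [if_pos rfl] at this
    linarith
  have h2 := Finset.sum_congr (rfl : (univ : Finset V) = univ) fun w _ => h1 w
  rw [Finset.sum_comm] at h2
  simp_rw [(B _).sum_fix] at h2
  rw [Finset.sum_sub_distrib, Finset.sum_add_distrib, Finset.sum_comm] at h2
  simp only [Finset.sum_ite_eq, Finset.mem_univ, if_true, Finset.sum_const, Finset.card_univ,
    nsmul_eq_mul, mul_one] at h2
  rw [Finset.sum_sub_distrib, h2]
  simp
  ring

/-- number of vertices projecting to `i` -/
noncomputable def Blk.N (b : Blk G) (i : ZMod b.k) : ℕ := (univ.filter fun v => b.π v = i).card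

/-- degree sum of the vertices projecting to `i` -/
noncomputable def Blk.D (b : Blk G) (i : ZMod b.k) : ℝ :=
  ∑ v ∈ univ.filter (fun v => b.π v = i), (G.degree v : ℝ)

noncomputable def Blk.cost (b : Blk G) : ℝ :=
  ∑ i, ∑ j, b.D i * b.N j * res b.k (i - j)

lemma Blk.sum_N (b : Blk G) : ∑ i, b.N i = Fintype.card V := by
  unfold Blk.N
  rw [← Finset.card_univ, ← Finset.card_eq_sum_card_fiberwise]
  simp

lemma Blk.sum_D (b : Blk G) : ∑ i, b.D i = ∑ v, (G.degree v : ℝ) := by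
  unfold Blk.D
  exact Finset.sum_fiberwise _ _ _

lemma Blk.one_le_N (b : Blk G) (i : ZMod b.k) : 1 ≤ b.N i := by
  unfold Blk.N
  rw [Nat.succ_le_iff, Finset.card_pos]
  exact ⟨b.s i, by simp [b.πs]⟩

lemma degRes_blk (hc : Cover B) (hG : G.Connected) : degRes G = ∑ b, (B b).cost := by
  have hdef : degRes G = (1 / 2) * ∑ u : V, ∑ v : V,
      ((G.degree u : ℝ) + (G.degree v : ℝ)) * effRes G u v := by
    unfold degRes
    congr!
  have hsymm : ∀ u v, RR B u v = RR B v u := by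
    intro u v
    unfold RR
    apply Finset.sum_congr rfl
    intro b _
    rw [← res_neg _ (B b).two_le]
    congr 1
    ring
  have h2 : degRes G = ∑ u : V, ∑ v : V, (G.degree u : ℝ) * RR B u v := by
    rw [hdef]
    simp_rw [effRes_blk B hc hG, add_mul, Finset.sum_add_distrib]
    have : ∑ u : V, ∑ v : V, (G.degree v : ℝ) * RR B u v =
      ∑ u : V, ∑ v : V, (G.degree u : ℝ) * RR B u v := by
      rw [Finset.sum_comm]
      simp_rw [hsymm]
    rw [this]; ring
  rw [h2]
  unfold RR
  simp_rw [Finset.mul_sum]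
  have : ∀ u : V, ∑ v : V, ∑ b, (G.degree u : ℝ) * res (B b).k ((B b).π u - (B b).π v) =
      ∑ b, ∑ v : V, (G.degree u : ℝ) * res (B b).k ((B b).π u - (B b).π v) := fun u =>
    Finset.sum_comm
  simp_rw [this]
  rw [Finset.sum_comm]
  apply Finset.sum_congr rfl
  intro b _
  unfold Blk.cost
  rw [← Finset.sum_fiberwise univ (B b).π]
  apply Finset.sum_congr rfl
  intro i _
  have : ∀ u ∈ univ.filter (fun v => (B b).π v = i), ∑ v : V, (G.degree u : ℝ) *
      res (B b).k ((B b).π u - (B b).π v) = ∑ j, (G.degree u : ℝ) * (B b).N j *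
        res (B b).k (i - j) := by
    intro u hu
    simp only [Finset.mem_filter, Finset.mem_univ, true_and] at hu
    rw [hu, ← Finset.sum_fiberwise univ (B b).π]
    apply Finset.sum_congr rfl
    intro j _
    rw [Finset.sum_congr rfl (g := fun _ => (G.degree u : ℝ) * res (B b).k (i - j))]
    · rw [Finset.sum_const, nsmul_eq_mul]
      unfold Blk.N
      ring
    · intro v hv
      simp only [Finset.mem_filter, Finset.mem_univ, true_and] at hv
      rw [hv]
  rw [Finset.sum_congr rfl this, Finset.sum_comm]
  apply Finset.sum_congr rfl
  intro j _
  unfold Blk.D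
  rw [Finset.sum_mul, Finset.sum_mul]

end

end CactusDR

set_option linter.unusedVariables false

namespace CactusDR

noncomputable def costF (k : ℕ) [NeZero k] (N : ZMod k → ℕ) (D : ZMod k → ℝ) : ℝ :=
  ∑ i, ∑ j, D i * N j * res k (i - j)

noncomputable def c2 (n t : ℝ) : ℝ := 3 * n - 4 + 2 * t
noncomputable def c3 (n t : ℝ) : ℝ := (16 * n - 32 + 8 * t) / 3
noncomputable def baseK (k : ℕ) (n t : ℝ) : ℝ :=
  if k = 2 then c2 n t else c3 n t + (k - 3) * c2 n t
noncomputable def Del (n t : ℝ) : ℝ := (8 * n + 4 * t - 36) / 3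
noncomputable def del4 (n t : ℝ) : ℝ := (5 * n + t - 31) / 3

def Conc {k : ℕ} (N : ZMod k → ℕ) : Prop := ∃ i, ∀ j, j ≠ i → N j = 1

lemma sum_res_nat (m : ℕ) (c : ℝ) :
    ∑ a ∈ Finset.range m, (a : ℝ) * (c - a) = c * m * (m - 1) / 2 - (m - 1) * m * (2 * m - 1) / 6 := by
  induction m with
  | zero => simp
  | succ m ih => rw [Finset.sum_range_succ, ih]; push_cast; ring

lemma sum_res (k : ℕ) [NeZero k] (hk : 3 ≤ k) : ∑ d : ZMod k, res k d = ((k : ℝ) ^ 2 - 1) / 6 := by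
  have hk0 : (k : ℝ) ≠ 0 := by exact_mod_cast (by omega : k ≠ 0)
  have h1 : ∑ d : ZMod k, res k d = ∑ a ∈ Finset.range k, (a : ℝ) * (k - a) / k := by
    symm
    apply Finset.sum_bij (fun (a : ℕ) _ => (a : ZMod k))
    · simp
    · intro a ha b hb h
      simp only [Finset.mem_range] at ha hb
      have := congrArg ZMod.val h
      rwa [ZMod.val_natCast, ZMod.val_natCast, Nat.mod_eq_of_lt ha, Nat.mod_eq_of_lt hb] at this
    · intro d _
      exact ⟨d.val, by simpa using d.val_lt, by simp⟩
    · intro a ha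
      simp only [Finset.mem_range] at ha
      rw [res_natCast k (by omega) a ha.le, if_neg (by omega)]
      ring
  rw [h1, ← Finset.sum_div, sum_res_nat]
  field_simp
  ring

lemma res_nonneg (k : ℕ) [NeZero k] (d : ZMod k) : 0 ≤ res k d := by
  unfold res
  have : (d.val : ℝ) ≤ k := by exact_mod_cast d.val_lt.le
  have : (0:ℝ) ≤ k - d.val := by linarith
  split_ifs <;> positivity

lemma res_ge (k : ℕ) [NeZero k] (hk : 3 ≤ k) (d : ZMod k) (hd : d ≠ 0) :
    ((k : ℝ) - 1) / k ≤ res k d := by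
  unfold res
  rw [if_neg (by omega), one_mul]
  have h1 : d.val < k := d.val_lt
  have h0 : d.val ≠ 0 := by rwa [Ne, ZMod.val_eq_zero]
  have h1 : (d.val : ℝ) + 1 ≤ k := by exact_mod_cast h1
  have h0 : (1 : ℝ) ≤ d.val := by exact_mod_cast (by omega : 1 ≤ d.val)
  apply div_le_div_of_nonneg_right _ (by positivity)
  nlinarith

lemma costF_expand (k : ℕ) [NeZero k] (hk : 3 ≤ k) (N : ZMod k → ℕ) (x T D : ZMod k → ℝ)
    (n t : ℝ) (hx : ∀ i, (N i : ℝ) = 1 + x i) (hD : ∀ i, D i = 2 + 2 * x i + T i)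
    (hX : ∑ i, x i = n - k) (hT : ∑ i, T i = 2 * (t - 1)) :
    costF k N D = ((k : ℝ) ^ 2 - 1) / 3 * (2 * n - k + t - 1)
      + ∑ i, ∑ j, (2 * x i + T i) * x j * res k (i - j) := by
  have hS1 : ∀ i : ZMod k, ∑ j, res k (i - j) = ((k : ℝ) ^ 2 - 1) / 6 := by
    intro i
    rw [← sum_res k hk]
    exact Fintype.sum_equiv (Equiv.subLeft i) _ _ fun j => by simp
  have hS2 : ∀ j : ZMod k, ∑ i, res k (i - j) = ((k : ℝ) ^ 2 - 1) / 6 := by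
    intro i
    rw [← sum_res k hk]
    exact Fintype.sum_equiv (Equiv.subRight i) _ _ fun j => by simp
  unfold costF
  have h1 : ∀ i j, D i * N j * res k (i - j) = (2 + 2 * x i + T i) * res k (i - j)
      + 2 * x j * res k (i - j) + (2 * x i + T i) * x j * res k (i - j) := by
    intro i j; rw [hx, hD]; ring
  simp_rw [h1, Finset.sum_add_distrib]
  congr 1
  rw [Finset.sum_comm (f := fun i j => 2 * x j * res k (i - j))]
  simp_rw [← Finset.mul_sum, hS1, hS2, ← Finset.sum_mul, Finset.sum_add_distrib,
    ← Finset.mul_sum, hX, hT]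
  simp
  ring

lemma extra_nonneg (k : ℕ) [NeZero k] (x T : ZMod k → ℝ) (hx : ∀ i, 0 ≤ x i) (hT : ∀ i, 0 ≤ T i) :
    0 ≤ ∑ i, ∑ j, (2 * x i + T i) * x j * res k (i - j) := by
  apply Finset.sum_nonneg; intro i _
  apply Finset.sum_nonneg; intro j _
  have := res_nonneg k (i - j)
  have := hx i
  have := hx j
  have := hT i
  positivity

lemma extra_ge (k : ℕ) [NeZero k] (hk : 3 ≤ k) (x T : ZMod k → ℝ) (hx : ∀ i, 0 ≤ x i)
    (hT : ∀ i, 0 ≤ T i) (X t : ℝ) (hX : ∑ i, x i = X) (hTs : ∑ i, T i = 2 * (t - 1))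
    (h1 : ∀ i, 1 ≤ X - x i) :
    ((k : ℝ) - 1) / k * (2 * (∑ i, x i * (X - x i)) + 2 * (t - 1)) ≤
      ∑ i, ∑ j, (2 * x i + T i) * x j * res k (i - j) := by
  classical
  have h2 : ∀ i, ((k : ℝ) - 1) / k * (2 * (x i * (X - x i)) + T i) ≤
      ∑ j, (2 * x i + T i) * x j * res k (i - j) := by
    intro i
    have hc : (0 : ℝ) ≤ ((k : ℝ) - 1) / k := by
      have : (1 : ℝ) ≤ k := by exact_mod_cast (by omega : 1 ≤ k)
      have : (0 : ℝ) ≤ k - 1 := by linarith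
      positivity
    have h3 : ∑ j, (2 * x i + T i) * x j * res k (i - j) ≥
        ∑ j ∈ univ.erase i, (2 * x i + T i) * x j * (((k : ℝ) - 1) / k) := by
      rw [← Finset.add_sum_erase univ _ (Finset.mem_univ i)]
      rw [sub_self, res_zero, mul_zero, zero_add]
      apply Finset.sum_le_sum
      intro j hj
      have := hx i
      have := hx j
      have := hT i
      apply mul_le_mul_of_nonneg_left _ (by positivity)
      apply res_ge k hk
      rw [sub_ne_zero]
      exact (Finset.ne_of_mem_erase hj).symm
    refine le_trans ?_ h3
    have h4 : ∑ j ∈ univ.erase i, x j = X - x i := by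
      rw [← hX, ← Finset.add_sum_erase univ _ (Finset.mem_univ i)]; ring
    rw [← Finset.sum_mul, ← Finset.mul_sum, h4, mul_comm]
    apply mul_le_mul_of_nonneg_right _ hc
    nlinarith [hT i, h1 i]
  refine le_trans (le_of_eq ?_) (Finset.sum_le_sum fun i _ => h2 i)
  rw [← Finset.mul_sum, Finset.sum_add_distrib, ← Finset.mul_sum, hTs]

lemma nonconc_one_le (k : ℕ) [NeZero k] (N : ZMod k → ℕ) (hN : ∀ i, 1 ≤ N i)
    (hc : ¬ Conc N) (i : ZMod k) :
    (1 : ℝ) ≤ (∑ j, ((N j : ℝ) - 1)) - ((N i : ℝ) - 1) := by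
  classical
  unfold Conc at hc
  push Not at hc
  obtain ⟨j, hji, hj⟩ := hc i
  rw [← Finset.add_sum_erase univ _ (Finset.mem_univ i), add_sub_cancel_left]
  have h1 : (1 : ℝ) ≤ (N j : ℝ) - 1 := by
    have : 2 ≤ N j := by have := hN j; omega
    have : (2 : ℝ) ≤ N j := by exact_mod_cast this
    linarith
  refine le_trans h1 (Finset.single_le_sum (f := fun j => (N j : ℝ) - 1) ?_
    (Finset.mem_erase.mpr ⟨hji, Finset.mem_univ j⟩))
  intro j _
  have : (1 : ℝ) ≤ N j := by exact_mod_cast hN j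
  linarith

lemma univ_zmod2 [NeZero 2] : (univ : Finset (ZMod 2)) = {0, 1} := by
  ext x
  simp only [Finset.mem_univ, true_iff]
  revert x
  decide

lemma univ_zmod3 [NeZero 3] : (univ : Finset (ZMod 3)) = {0, 1, 2} := by
  ext x
  simp only [Finset.mem_univ, true_iff]
  revert x
  decide

lemma tri_two (y z S : ℝ) (hS : 22 ≤ S) (h : y + z = S) (hy : y = 1 ∨ 2 ≤ y) (hz : z = 1 ∨ 2 ≤ z) :
    (y = 1 ∧ S - 1 ≤ y * z) ∨ (z = 1 ∧ S - 1 ≤ y * z) ∨ S ≤ y * z := by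
  rcases hy with hy | hy
  · left; subst hy; exact ⟨rfl, by linarith⟩
  rcases hz with hz | hz
  · right; left; subst hz; exact ⟨rfl, by linarith⟩
  · right; right; nlinarith [mul_nonneg (sub_nonneg.2 hy) (sub_nonneg.2 hz)]

lemma exc_two (n t : ℕ) (hn : 25 ≤ n) (hnt : 2 * t + 1 ≤ n) (k : ℕ) [NeZero k] (hk : k = 2)
    (N : ZMod k → ℕ) (D : ZMod k → ℝ) (hN : ∀ i, 1 ≤ N i) (hNs : ∑ i, N i = n)
    (hD : ∀ i, 2 * (N i : ℝ) - 1 ≤ D i) (hDs : ∑ i, D i = 2 * ((n : ℝ) - 1 + t)) :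
    (Conc N ∧ baseK k n t ≤ costF k N D) ∨ baseK k n t + Del n t < costF k N D := by
  subst hk
  have h01 : (0 : ZMod 2) ≠ 1 := by decide
  have r1 : res 2 1 = 1 := by
    have := res_natCast 2 le_rfl 1 (by norm_num)
    norm_num at this
    exact this
  unfold costF baseK
  rw [univ_zmod2] at hNs hDs ⊢
  simp only [Finset.sum_pair h01] at hNs hDs ⊢
  have e1 : (0 : ZMod 2) - 1 = 1 := by decide
  have e2 : (1 : ZMod 2) - 0 = 1 := by decide
  simp only [sub_self, res_zero, e1, e2, r1, if_true, c2, Del]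
  have hN0 := hN 0
  have hN1 := hN 1
  have hD0 := hD 0
  have hD1 := hD 1
  generalize hA : N 0 = a at *
  generalize hB : N 1 = b at *
  generalize D 0 = d at *
  generalize D 1 = e at *
  have hs : (a : ℝ) + b = n := by exact_mod_cast hNs
  have ha : (1 : ℝ) ≤ a := by exact_mod_cast hN0
  have hb : (1 : ℝ) ≤ b := by exact_mod_cast hN1
  have hn' : (25 : ℝ) ≤ n := by exact_mod_cast hn
  have hnt' : 2 * (t : ℝ) + 1 ≤ n := by exact_mod_cast hnt
  have ht' : (0 : ℝ) ≤ t := by positivity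
  by_cases h1 : a = 1
  · left
    refine ⟨⟨1, ?_⟩, ?_⟩
    · intro j hj
      have : j = 0 := by revert j; decide
      rw [this, hA, h1]
    · subst h1
      push_cast at *
      nlinarith
  by_cases h2 : b = 1
  · left
    refine ⟨⟨0, ?_⟩, ?_⟩
    · intro j hj
      have : j = 1 := by revert j; decide
      rw [this, hB, h2]
    · subst h2
      push_cast at *
      nlinarith
  right
  have ha : (2 : ℝ) ≤ a := by exact_mod_cast (by omega : 2 ≤ a)
  have hb : (2 : ℝ) ≤ b := by exact_mod_cast (by omega : 2 ≤ b)
  have h5 : 2 * (n : ℝ) - 4 ≤ a * b := by nlinarith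
  have h6 : (d - (2 * a - 1)) * b ≥ (d - (2 * a - 1)) * 2 :=
    mul_le_mul_of_nonneg_left hb (by linarith)
  have h7 : (e - (2 * b - 1)) * a ≥ (e - (2 * b - 1)) * 2 :=
    mul_le_mul_of_nonneg_left ha (by linarith)
  have h8 : d * 0 = 0 := mul_zero d
  nlinarith

/-- the key inequality for long cycles -/
lemma long_ineq (k n t : ℝ) (hk : 9 ≤ k) (hkn : k ≤ n) (hn : 25 ≤ n) (ht : 1 ≤ t) :
    24 * n + 12 * t - 68 + (k - 3) * (9 * n + 6 * t - 12) < (k ^ 2 - 1) * (2 * n - k + t - 1) := by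
  have h1 : (k ^ 2 - 1) * (n + t - 1) ≤ (k ^ 2 - 1) * (2 * n - k + t - 1) := by
    apply mul_le_mul_of_nonneg_left <;> nlinarith
  refine lt_of_lt_of_le ?_ h1
  have h2 : 0 ≤ (k ^ 2 - 6 * k + 5) * (t - 1) := by
    apply mul_nonneg <;> nlinarith
  have h3 : 0 ≤ (k ^ 2 - 9 * k + 2) * (n - k) := by
    apply mul_nonneg <;> nlinarith
  rcases le_or_gt 10 k with h | h
  · have : 0 ≤ (k ^ 2 - 9 * k + 2 - k) * k := by
      apply mul_nonneg <;> nlinarith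
    nlinarith
  · have : 0 ≤ (k ^ 2 - 9 * k) * n := by
      apply mul_nonneg <;> nlinarith
    nlinarith

lemma exc_cyc (n t : ℕ) (hn : 25 ≤ n) (hnt : 2 * t + 1 ≤ n) (ht : 1 ≤ t) (k : ℕ) [NeZero k]
    (hk : 3 ≤ k)
    (N : ZMod k → ℕ) (D : ZMod k → ℝ) (hN : ∀ i, 1 ≤ N i) (hNs : ∑ i, N i = n)
    (hD : ∀ i, 2 * (N i : ℝ) ≤ D i) (hDs : ∑ i, D i = 2 * ((n : ℝ) - 1 + t)) :
    (k = 3 ∧ Conc N ∧ baseK k n t ≤ costF k N D) ∨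
    (k = 3 ∧ (∃ i j, i ≠ j ∧ N i = 1 ∧ N j = 2) ∧ baseK k n t + Del n t ≤ costF k N D) ∨
    (k = 4 ∧ Conc N ∧ baseK k n t + del4 n t ≤ costF k N D) ∨
    baseK k n t + Del n t < costF k N D := by
  set x : ZMod k → ℝ := fun i => (N i : ℝ) - 1 with hxdef
  set T : ZMod k → ℝ := fun i => D i - 2 * N i with hTdef
  have hx0 : ∀ i, 0 ≤ x i := fun i => by
    have : (1 : ℝ) ≤ N i := by exact_mod_cast hN i
    simp only [hxdef]; linarith
  have hT0 : ∀ i, 0 ≤ T i := fun i => by have := hD i; simp only [hTdef]; linarith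
  have hNs' : ∑ i, (N i : ℝ) = n := by exact_mod_cast hNs
  have hX : ∑ i, x i = (n : ℝ) - k := by
    simp only [hxdef, Finset.sum_sub_distrib, hNs']; simp
  have hT : ∑ i, T i = 2 * ((t : ℝ) - 1) := by
    simp only [hTdef, Finset.sum_sub_distrib, ← Finset.mul_sum, hNs', hDs]; ring
  have hexp := costF_expand k hk N x T D n t (fun i => by simp [hxdef])
    (fun i => by simp only [hxdef, hTdef]; ring) hX hT
  have hge0 := extra_nonneg k x T hx0 hT0
  have hn' : (25 : ℝ) ≤ n := by exact_mod_cast hn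
  have hnt' : 2 * (t : ℝ) + 1 ≤ n := by exact_mod_cast hnt
  have ht' : (1 : ℝ) ≤ t := by exact_mod_cast ht
  have hkn : (k : ℝ) ≤ n := by
    have : 0 ≤ ∑ i, x i := Finset.sum_nonneg fun i _ => hx0 i
    linarith
  have hnc : ¬ Conc N → ∀ i, 1 ≤ ((n : ℝ) - k) - x i := by
    intro h i
    have := nonconc_one_le k N hN h i
    have e : ∑ j, ((N j : ℝ) - 1) = (n : ℝ) - k := hX
    rw [e] at this
    exact this
  rcases (show k = 3 ∨ k = 4 ∨ k = 5 ∨ k = 6 ∨ k = 7 ∨ k = 8 ∨ 9 ≤ k by omega) with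
    h | h | h | h | h | h | h
  · subst h
    by_cases hc : Conc N
    · left
      refine ⟨rfl, hc, ?_⟩
      rw [hexp]
      simp only [baseK, c3, c2]
      norm_num
      norm_num at hge0
      linarith
    · right
      have h1 := extra_ge 3 le_rfl x T hx0 hT0 _ t hX hT (hnc hc)
      have hu := univ_zmod3
      have hQ : ∑ i, x i * (((n : ℝ) - (3 : ℕ)) - x i) =
          2 * (x 0 * x 1 + x 0 * x 2 + x 1 * x 2) := by
        rw [← hX, hu]
        have a1 : (0 : ZMod 3) ∉ ({1, 2} : Finset (ZMod 3)) := by decide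
        have a2 : (1 : ZMod 3) ∉ ({2} : Finset (ZMod 3)) := by decide
        simp only [Finset.sum_insert a1, Finset.sum_insert a2, Finset.sum_singleton]
        ring
      have hS : x 0 + x 1 + x 2 = (n : ℝ) - 3 := by
        have := hX
        rw [hu] at this
        have a1 : (0 : ZMod 3) ∉ ({1, 2} : Finset (ZMod 3)) := by decide
        have a2 : (1 : ZMod 3) ∉ ({2} : Finset (ZMod 3)) := by decide
        simp only [Finset.sum_insert a1, Finset.sum_insert a2, Finset.sum_singleton] at this
        push_cast at this
        linarith
      rw [hQ] at h1
      norm_num at h1 hexp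
      have hnc3 : ∀ i, 1 ≤ ((n : ℝ) - 3) - x i := by
        have := hnc hc; norm_num at this; exact this
      have hdi : ∀ i, x i = 0 ∨ x i = 1 ∨ 2 ≤ x i := by
        intro i
        have := hN i
        simp only [hxdef]
        rcases (show N i = 1 ∨ N i = 2 ∨ 3 ≤ N i by omega) with h | h | h
        · left; rw [h]; norm_num
        · right; left; rw [h]; norm_num
        · right; right
          have : (3 : ℝ) ≤ N i := by exact_mod_cast h
          linarith
      have back0 : ∀ i, x i = 0 → N i = 1 := by
        intro i hi
        have : (N i : ℝ) = 1 := by simp only [hxdef] at hi; linarith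
        exact_mod_cast this
      have back1 : ∀ i, x i = 1 → N i = 2 := by
        intro i hi
        have : (N i : ℝ) = 2 := by simp only [hxdef] at hi; linarith
        exact_mod_cast this
      have hg : 0 ≤ (1 : ℝ) := by norm_num
      have fin1 : (n : ℝ) - 4 ≤ x 0 * x 1 + x 0 * x 2 + x 1 * x 2 →
          baseK 3 n t + Del n t ≤ costF 3 N D := by
        intro hq
        rw [hexp]
        simp only [baseK, c3, c2, Del]
        norm_num
        linarith
      have fin2 : (n : ℝ) - 3 ≤ x 0 * x 1 + x 0 * x 2 + x 1 * x 2 →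
          baseK 3 n t + Del n t < costF 3 N D := by
        intro hq
        rw [hexp]
        simp only [baseK, c3, c2, Del]
        norm_num
        linarith
      have d01 : (0 : ZMod 3) ≠ 1 := by decide
      have d02 : (0 : ZMod 3) ≠ 2 := by decide
      have d12 : (1 : ZMod 3) ≠ 2 := by decide
      have p0 := hnc3 0
      have p1 := hnc3 1
      have p2 := hnc3 2
      clear_value x T
      have q0 := hdi 0
      have q1 := hdi 1
      have q2 := hdi 2
      have hS22 : (22 : ℝ) ≤ n - 3 := by linarith
      have one : ∀ y : ℝ, y = 1 ∨ 2 ≤ y → 1 ≤ y := by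
        rintro y (h | h) <;> linarith
      rcases q0 with h0 | h0
      · have g1 : x 1 = 1 ∨ 2 ≤ x 1 := by
          rcases q1 with h | h
          · linarith
          · exact h
        have g2 : x 2 = 1 ∨ 2 ≤ x 2 := by
          rcases q2 with h | h
          · linarith
          · exact h
        rcases tri_two (x 1) (x 2) _ hS22 (by linarith) g1 g2 with ⟨h, h'⟩ | ⟨h, h'⟩ | h
        · left; exact ⟨rfl, ⟨0, 1, d01, back0 _ h0, back1 _ h⟩, fin1 (by rw [h0]; linarith)⟩
        · left; exact ⟨rfl, ⟨0, 2, d02, back0 _ h0, back1 _ h⟩, fin1 (by rw [h0]; linarith)⟩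
        · right; right; exact fin2 (by rw [h0]; linarith)
      rcases q1 with h1 | h1
      · have g2 : x 2 = 1 ∨ 2 ≤ x 2 := by
          rcases q2 with h | h
          · linarith
          · exact h
        rcases tri_two (x 0) (x 2) _ hS22 (by linarith) h0 g2 with ⟨h, h'⟩ | ⟨h, h'⟩ | h
        · left; exact ⟨rfl, ⟨1, 0, d01.symm, back0 _ h1, back1 _ h⟩, fin1 (by rw [h1]; linarith)⟩
        · left; exact ⟨rfl, ⟨1, 2, d12, back0 _ h1, back1 _ h⟩, fin1 (by rw [h1]; linarith)⟩
        · right; right; exact fin2 (by rw [h1]; linarith)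
      rcases q2 with h2 | h2
      · rcases tri_two (x 0) (x 1) _ hS22 (by linarith) h0 h1 with ⟨h, h'⟩ | ⟨h, h'⟩ | h
        · left; exact ⟨rfl, ⟨2, 0, d02.symm, back0 _ h2, back1 _ h⟩, fin1 (by rw [h2]; linarith)⟩
        · left; exact ⟨rfl, ⟨2, 1, d12.symm, back0 _ h2, back1 _ h⟩, fin1 (by rw [h2]; linarith)⟩
        · right; right; exact fin2 (by rw [h2]; linarith)
      have h0 := one _ h0
      have h1 := one _ h1
      have h2 := one _ h2
      right; right
      apply fin2
      have e1 := mul_nonneg (sub_nonneg.2 h0) (sub_nonneg.2 h1)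
      have e2 := mul_nonneg (sub_nonneg.2 h0) (sub_nonneg.2 h2)
      have e3 := mul_nonneg (sub_nonneg.2 h1) (sub_nonneg.2 h2)
      linarith
  · subst h
    by_cases hc : Conc N
    · right; right; left
      refine ⟨rfl, hc, ?_⟩
      rw [hexp]
      simp only [baseK, c3, c2, del4]
      norm_num
      norm_num at hge0
      linarith
    · right; right; right
      have h1 := extra_ge 4 (by norm_num) x T hx0 hT0 _ t hX hT (hnc hc)
      have hQ : (2 : ℝ) * ((n : ℝ) - 5) ≤ ∑ i, x i * (((n : ℝ) - (4 : ℕ)) - x i) := by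
        have hp : ∀ i, N i ≠ 1 → (n : ℝ) - 5 ≤ x i * (((n : ℝ) - (4 : ℕ)) - x i) := by
          intro i hi
          have h2 := hnc hc i
          have : 2 ≤ N i := by have := hN i; omega
          have : (2 : ℝ) ≤ N i := by exact_mod_cast this
          have h3 : 1 ≤ x i := by simp only [hxdef]; linarith
          push_cast at h2 ⊢
          nlinarith
        have hp0 : ∀ i, 0 ≤ x i * (((n : ℝ) - (4 : ℕ)) - x i) := fun i =>
          mul_nonneg (hx0 i) (by have := hnc hc i; linarith)
        unfold Conc at hc
        push Not at hc
        obtain ⟨i, -, hi⟩ := hc 0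
        obtain ⟨j, hji, hj⟩ := hc i
        have := Finset.sum_le_sum_of_subset_of_nonneg (Finset.subset_univ ({i, j} : Finset (ZMod 4)))
          (f := fun i => x i * (((n : ℝ) - (4 : ℕ)) - x i)) (fun i _ _ => hp0 i)
        rw [Finset.sum_pair hji.symm] at this
        have h5 := hp i hi
        have h6 := hp j hj
        linarith
      rw [hexp]
      simp only [baseK, c3, c2, Del]
      norm_num
      norm_num at h1 hQ hge0
      linarith
  · right; right; right
    rw [hexp]; simp only [baseK, c3, c2, Del]
    subst h
    norm_num
    norm_num at hge0
    linarith
  · right; right; right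
    rw [hexp]; simp only [baseK, c3, c2, Del]
    subst h
    norm_num
    norm_num at hge0
    linarith
  · right; right; right
    rw [hexp]; simp only [baseK, c3, c2, Del]
    subst h
    norm_num
    norm_num at hge0
    linarith
  · right; right; right
    rw [hexp]; simp only [baseK, c3, c2, Del]
    subst h
    norm_num
    norm_num at hge0
    linarith
  · right; right; right
    rw [hexp]; simp only [baseK, c3, c2, Del]
    rw [if_neg (by omega)]
    have := long_ineq k n t (by exact_mod_cast h) hkn hn' ht'
    nlinarith

end CactusDR

set_option linter.unusedSectionVars false
set_option linter.unusedVariables false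

namespace CactusDR

section

variable {V : Type*} [Fintype V] [DecidableEq V] {G : SimpleGraph V} [DecidableRel G.Adj]

/-- the graph obtained by removing the edges of the block -/
def Blk.fib (b : Blk G) : SimpleGraph V where
  Adj u v := G.Adj u v ∧ b.π u = b.π v
  symm := ⟨fun u v h => ⟨h.1.symm, h.2.symm⟩⟩
  loopless := ⟨fun u h => G.loopless.irrefl u h.1⟩

lemma Blk.fib_reach (b : Blk G) (hG : G.Connected) (v : V) : b.fib.Reachable (b.s (b.π v)) v := by
  have h := hG.preconnected (b.s 0) v
  rw [SimpleGraph.reachable_iff_reflTransGen] at h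
  induction h with
  | refl => rw [b.πs]
  | @tail u v _ huv ih =>
    by_cases hπ : b.π u = b.π v
    · rw [← hπ]
      exact ih.trans (SimpleGraph.Adj.reachable ⟨huv, hπ⟩)
    · rw [(b.edge v u huv.symm (Ne.symm hπ)).1]

lemma Blk.out_nbr (b : Blk G) (v : V) :
    (((G.neighborFinset v).filter fun w => b.π w ≠ b.π v).card : ℝ) =
      if b.s (b.π v) = v then b.dB else 0 := by
  have h := b.sum_nbr v (fun j => if j = b.π v then 0 else 1) (by simp)
  have h2 : ∑ j ∈ ({b.π v + 1, b.π v - 1} : Finset (ZMod b.k)),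
      (if j = b.π v then (0 : ℝ) else 1) = b.dB := by
    unfold Blk.dB
    rw [← card_pair _ b.two_le (b.π v)]
    apply Finset.sum_congr rfl
    intro j hj
    rw [if_neg]
    simp only [Finset.mem_insert, Finset.mem_singleton] at hj
    rcases hj with rfl | rfl
    · exact add_one_ne_zmod _ b.two_le _
    · intro h
      exact add_one_ne_zmod _ b.two_le (b.π v) (by nth_rw 1 [← h]; ring)
  rw [h2] at h
  rw [← h, Finset.card_filter]
  push_cast
  apply Finset.sum_congr rfl
  intro w _
  by_cases hw : b.π w = b.π v <;> simp [hw]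

lemma Blk.D_ge (b : Blk G) (hG : G.Connected) (i : ZMod b.k) :
    2 * ((b.N i : ℝ) - 1) + b.dB ≤ b.D i := by
  classical
  let S : Set V := {v | b.π v = i}
  let H := b.fib.induce S
  have hconn : H.Connected := by
    rw [SimpleGraph.connected_iff_exists_forall_reachable]
    refine ⟨⟨b.s i, b.πs i⟩, ?_⟩
    rintro ⟨v, hv⟩
    have h := b.fib_reach hG v
    have hv' : b.π v = i := hv
    rw [hv', SimpleGraph.reachable_iff_reflTransGen] at h
    induction h with
    | refl => rfl
    | @tail u v _ huv ih =>
      have hu : b.π u = i := by rw [huv.2]; exact hv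
      exact (ih hu hu).trans (SimpleGraph.Adj.reachable (by simpa [H] using huv))
  have h1 := hconn.card_vert_le_card_edgeSet_add_one
  have h2 := H.sum_degrees_eq_twice_card_edges
  rw [Nat.card_eq_fintype_card, Nat.card_eq_fintype_card, ← SimpleGraph.edgeFinset_card] at h1
  have hS : Fintype.card S = b.N i := by
    unfold Blk.N
    rw [Fintype.card_subtype]
    congr!
  rw [hS] at h1
  have hdeg : ∀ v : S, (H.degree v : ℝ) + (if b.s (b.π v) = v then b.dB else 0) ≤ G.degree v := by
    intro v
    rw [← b.out_nbr, ← G.card_neighborFinset_eq_degree,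
      ← Finset.card_filter_add_card_filter_not (s := G.neighborFinset v) (fun w => b.π w = b.π v)]
    push_cast
    gcongr
    rw [← H.card_neighborFinset_eq_degree]
    apply Finset.card_le_card_of_injOn (fun w : S => (w : V))
    · intro w hw
      simp only [Finset.mem_coe, SimpleGraph.mem_neighborFinset, Finset.mem_filter] at hw ⊢
      have hw' : b.fib.Adj v w := by simpa [H] using hw
      exact ⟨hw'.1, hw'.2.symm⟩
    · intro w _ w' _ h; exact Subtype.ext h
  have h3 : ∑ v : S, ((H.degree v : ℝ) + (if b.s (b.π v) = v then b.dB else 0)) ≤ b.D i := by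
    refine le_trans (Finset.sum_le_sum fun v _ => hdeg v) (le_of_eq ?_)
    unfold Blk.D
    rw [Finset.sum_subtype (p := fun v => b.π v = i) _ (by simp)]
    rfl
  rw [Finset.sum_add_distrib] at h3
  have h4 : ∑ v : S, (if b.s (b.π v) = v then b.dB else 0) = b.dB := by
    rw [Finset.sum_eq_single (⟨b.s i, b.πs i⟩ : S)]
    · simp [b.πs]
    · rintro ⟨v, hv⟩ _ hne
      rw [if_neg]
      intro h
      apply hne
      apply Subtype.ext
      have hv' : b.π v = i := hv
      simp only [hv'] at h
      exact h.symm
    · simp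
  have h5 : ∑ v : S, (H.degree v : ℝ) = 2 * (#H.edgeFinset : ℝ) := by exact_mod_cast h2
  have h6 : (b.N i : ℝ) ≤ #H.edgeFinset + 1 := by exact_mod_cast h1
  rw [h4, h5] at h3
  linarith

variable {β : Type*} [Fintype β] (B : β → Blk G)

noncomputable def base (n t : ℝ) : ℝ := (n - 1) * c2 n t + t * (c3 n t - 2 * c2 n t)

/-- A block decomposition of a cactus with `n` vertices and `t` cycles. -/
structure Dec (n t : ℕ) : Prop where
  cov : Cover B
  conn : G.Connected
  card : Fintype.card V = n
  cyc : (univ.filter fun b => (B b).k ≠ 2).card = t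

variable {B} {n t : ℕ}


lemma Dec.sum_k (hd : Dec B n t) : ∑ b, ((B b).k - 1 : ℝ) = (n : ℝ) - 1 := by
  rw [sum_k_blk B hd.cov hd.conn, hd.card]

lemma Dec.sum_cyc (hd : Dec B n t) (c : ℝ) : ∑ b, (if (B b).k ≠ 2 then c else 0) = t * c := by
  rw [← Finset.sum_filter, Finset.sum_const, hd.cyc, nsmul_eq_mul]

lemma Dec.sum_deg (hd : Dec B n t) : ∑ v, (G.degree v : ℝ) = 2 * ((n : ℝ) - 1 + t) := by
  rw [sum_degree_blk B hd.cov]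
  have h : ∀ b, ((B b).k : ℝ) * (B b).dB = 2 * ((B b).k - 1 : ℝ) + (if (B b).k ≠ 2 then 2 else 0) := by
    intro b
    unfold Blk.dB
    by_cases h : (B b).k = 2
    · simp [h]; norm_num
    · simp [h]; ring
  simp_rw [h]
  rw [Finset.sum_add_distrib, ← Finset.mul_sum, hd.sum_k, hd.sum_cyc]
  ring

lemma Dec.sum_base (hd : Dec B n t) : ∑ b, baseK (B b).k n t = base n t := by
  have h : ∀ b, baseK (B b).k n t = ((B b).k - 1 : ℝ) * c2 n t +
      (if (B b).k ≠ 2 then (c3 n t - 2 * c2 n t) else 0) := by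
    intro b
    unfold baseK
    by_cases h : (B b).k = 2
    · simp [h]; norm_num
    · simp [h]; ring
  simp_rw [h]
  rw [Finset.sum_add_distrib, ← Finset.sum_mul, hd.sum_k, hd.sum_cyc]
  rfl

lemma Dec.sum_k_nat (hd : Dec B n t) : ∑ b, ((B b).k - 1) = n - 1 := by
  have h := hd.sum_k
  have hn : 1 ≤ n := by
    rw [← hd.card]; have := hd.conn.nonempty; exact Fintype.card_pos
  have : ((∑ b, ((B b).k - 1) : ℕ) : ℝ) = ((n - 1 : ℕ) : ℝ) := by
    rw [Nat.cast_sum, Nat.cast_sub hn]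
    push_cast
    rw [← h]
    apply Finset.sum_congr rfl
    intro b _
    rw [Nat.cast_sub (by have := (B b).two_le; omega)]
    simp
  exact_mod_cast this

lemma Dec.two_t (hd : Dec B n t) : 2 * t + 1 ≤ n := by
  have h := hd.sum_k_nat
  have hn : 1 ≤ n := by
    rw [← hd.card]; have := hd.conn.nonempty; exact Fintype.card_pos
  have h2 : ∑ b, (if (B b).k ≠ 2 then 2 else 0) ≤ ∑ b, ((B b).k - 1) := by
    apply Finset.sum_le_sum
    intro b _
    have := (B b).two_le
    split_ifs <;> omega
  rw [← Finset.sum_filter, Finset.sum_const, hd.cyc, smul_eq_mul] at h2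
  omega

lemma Dec.exc (hd : Dec B n t) (hn : 25 ≤ n) (ht : 1 ≤ t) (b : β) :
    ((B b).k ≤ 3 ∧ Conc (B b).N ∧ baseK (B b).k n t ≤ (B b).cost) ∨
    ((B b).k = 3 ∧ (∃ i j, i ≠ j ∧ (B b).N i = 1 ∧ (B b).N j = 2) ∧
      baseK (B b).k n t + Del n t ≤ (B b).cost) ∨
    ((B b).k = 4 ∧ Conc (B b).N ∧ baseK (B b).k n t + del4 n t ≤ (B b).cost) ∨
    baseK (B b).k n t + Del n t < (B b).cost := by
  have hN := (B b).one_le_N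
  have hNs := (B b).sum_N
  have hDs := (B b).sum_D
  rw [hd.card] at hNs
  rw [hd.sum_deg] at hDs
  have hD := (B b).D_ge hd.conn
  have hcost : (B b).cost = costF (B b).k (B b).N (B b).D := rfl
  rw [hcost]
  by_cases h : (B b).k = 2
  · rcases exc_two n t hn hd.two_t (B b).k h (B b).N (B b).D hN hNs (fun i => by
      have := hD i
      unfold Blk.dB at this
      rw [if_pos h] at this
      linarith) hDs with h' | h'
    · left; exact ⟨by omega, h'⟩
    · right; right; right; exact h'
  · have h3 : 3 ≤ (B b).k := by have := (B b).two_le; omega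
    rcases exc_cyc n t hn hd.two_t ht (B b).k h3 (B b).N (B b).D hN hNs (fun i => by
      have := hD i
      unfold Blk.dB at this
      rw [if_neg h] at this
      linarith) hDs with ⟨h1, h'⟩ | h' | h' | h'
    · left; exact ⟨by omega, h'⟩
    · right; left; exact h'
    · right; right; left; exact h'
    · right; right; right; exact h'

end

end CactusDR

set_option linter.unusedSectionVars false
set_option linter.unusedVariables false

namespace CactusDR

section

variable {V : Type*} [Finite V] {G : SimpleGraph V}

lemma cyc_same_edge (hG : IsCactus G) (H₁ H₂ : G.Subgraph) (h1 : IsCycleSubgraph H₁)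
    (h2 : IsCycleSubgraph H₂) (u v : V) (a1 : H₁.Adj u v) (a2 : H₂.Adj u v) : H₁ = H₂ := by
  by_contra hne
  have h := hG.2 H₁ H₂ h1 h2 hne
  have hs : ({u, v} : Set V) ⊆ H₁.verts ∩ H₂.verts := by
    rintro x (rfl | rfl)
    · exact ⟨H₁.edge_vert a1, H₂.edge_vert a2⟩
    · exact ⟨H₁.edge_vert a1.symm, H₂.edge_vert a2.symm⟩
  have h3 := Set.ncard_le_ncard hs (Set.toFinite _)
  rw [Set.ncard_pair (H₁.adj_sub a1).ne] at h3
  omega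

lemma cyc_of_walk {u : V} (p : G.Walk u u) (hp : p.IsCycle) : IsCycleSubgraph p.toSubgraph := by
  refine ⟨p.toSubgraph_connected.coe, ?_⟩
  intro v hv
  exact hp.ncard_neighborSet_toSubgraph_eq_two (p.mem_verts_toSubgraph.mp hv)

lemma walk_of_cyc (hG : IsCactus G) (H : G.Subgraph) (hH : IsCycleSubgraph H) :
    ∃ (u : V) (p : G.Walk u u), p.IsCycle ∧ p.toSubgraph = H := by
  have hK : H.spanningCoe.IsCycles := by
    rintro v ⟨w, hw⟩
    exact hH.2 v (H.edge_vert hw)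
  obtain ⟨⟨v, hv⟩⟩ := hH.1.nonempty
  have h2 := hH.2 v hv
  obtain ⟨w, hw⟩ : {u | H.Adj v u}.Nonempty := by
    apply Set.nonempty_of_ncard_ne_zero; omega
  obtain ⟨u, p, hp, hpe⟩ := SimpleGraph.adj_and_reachable_delete_edges_iff_exists_cycle.mp
    ⟨(show H.spanningCoe.Adj v w from hw), hK.reachable_deleteEdges (show H.spanningCoe.Adj v w from hw)⟩
  have hle : H.spanningCoe ≤ G := H.spanningCoe_le
  have hc : (p.mapLe hle).IsCycle := hp.mapLe hle
  refine ⟨u, p.mapLe hle, hc, ?_⟩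
  apply cyc_same_edge hG _ _ (cyc_of_walk _ hc) hH v w _ hw
  rw [SimpleGraph.Walk.adj_toSubgraph_mapLe, SimpleGraph.Walk.adj_toSubgraph_iff_mem_edges]
  exact hpe

/-- generic construction of a block from a separating enumeration -/
lemma mk_blk (hG : G.Connected) (K : SimpleGraph V) (hK : K ≤ G) (k : ℕ) (hk : 2 ≤ k)
    (s : ZMod k → V) (adj : ∀ i, G.Adj (s i) (s (i + 1)))
    (hedge : ∀ u v, G.Adj u v → ¬ K.Adj u v → ∃ i, s(u, v) = s(s i, s (i + 1)))
    (hsep : ∀ i j, K.Reachable (s i) (s j) → i = j) :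
    ∃ b : Blk G, b.k = k ∧ ∀ u v, G.Adj u v → (b.π u ≠ b.π v ↔ ¬ K.Adj u v) := by
  have hex : ∀ v, ∃ i, K.Reachable (s i) v := by
    intro v
    have h := hG.preconnected (s 0) v
    rw [SimpleGraph.reachable_iff_reflTransGen] at h
    induction h with
    | refl => exact ⟨0, by rfl⟩
    | @tail u v _ huv ih =>
      obtain ⟨i, hi⟩ := ih
      by_cases hu : K.Adj u v
      · exact ⟨i, hi.trans hu.reachable⟩
      · obtain ⟨j, hj⟩ := hedge u v huv hu
        rcases Sym2.eq_iff.mp hj with ⟨_, rfl⟩ | ⟨_, rfl⟩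
        · exact ⟨j + 1, by rfl⟩
        · exact ⟨j, by rfl⟩
  choose π hπ using hex
  have hπs : ∀ i, π (s i) = i := fun i => hsep _ _ (hπ (s i))
  have hKπ : ∀ u v, K.Adj u v → π u = π v := fun u v h =>
    hsep _ _ (((hπ u).trans h.reachable).trans (hπ v).symm)
  refine ⟨⟨k, hk, s, π, hπs, adj, ?_⟩, rfl, ?_⟩
  · intro u v huv hne
    obtain ⟨j, hj⟩ := hedge u v huv (fun h => hne (hKπ u v h))
    rcases Sym2.eq_iff.mp hj with ⟨rfl, rfl⟩ | ⟨rfl, rfl⟩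
    · simp [hπs]
    · simp [hπs]
  · intro u v huv
    constructor
    · intro h h'; exact h (hKπ u v h')
    · intro h
      obtain ⟨j, hj⟩ := hedge u v huv h
      rcases Sym2.eq_iff.mp hj with ⟨rfl, rfl⟩ | ⟨rfl, rfl⟩
      · simp only [hπs]; exact (add_one_ne_zmod k hk j).symm
      · simp only [hπs]; exact (add_one_ne_zmod k hk j)

lemma blk_of_bridge (hG : G.Connected) (u v : V) (huv : G.Adj u v) (hb : G.IsBridge s(u, v)) :
    ∃ b : Blk G, b.k = 2 ∧ ∀ x y, G.Adj x y → (b.π x ≠ b.π y ↔ s(x, y) = s(u, v)) := by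
  rw [SimpleGraph.isBridge_iff] at hb
  have hs : ∀ i : ZMod 2, i = 0 ∨ i = 1 := by decide
  obtain ⟨b, hb1, hb2⟩ := mk_blk hG (G.deleteEdges {s(u, v)}) (SimpleGraph.deleteEdges_le _) 2 le_rfl
    (fun i => if i = 0 then u else v) (by
      intro i
      rcases hs i with rfl | rfl
      · simpa using huv
      · have : (1 : ZMod 2) + 1 = 0 := by decide
        simpa [this] using huv.symm) (by
      intro x y hxy hn
      refine ⟨0, ?_⟩
      rw [SimpleGraph.deleteEdges_adj] at hn
      simp [hxy] at hn ⊢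
      tauto) (by
      intro i j hij
      rcases hs i with rfl | rfl <;> rcases hs j with rfl | rfl
      · rfl
      · exact absurd (by simpa using hij) hb
      · exact absurd (by simpa using hij.symm) hb
      · rfl)
  refine ⟨b, hb1, ?_⟩
  intro x y hxy
  rw [hb2 x y hxy, SimpleGraph.deleteEdges_adj]
  simp [hxy]
  tauto

lemma edge_inj (k : ℕ) (hk : 3 ≤ k) (s : ZMod k → V) (hs : Function.Injective s) (i j : ZMod k)
    (h : s(s i, s (i + 1)) = s(s j, s (j + 1))) : i = j := by
  rcases Sym2.eq_iff.mp h with ⟨h1, _⟩ | ⟨h1, h2⟩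
  · exact hs h1
  · exfalso
    have h1 := hs h1
    have h2 := hs h2
    apply two_ne_zero_zmod k hk i
    rw [h2, h1]; ring

lemma blk_of_cyc (hG : IsCactus G) (H : G.Subgraph) (hH : IsCycleSubgraph H) :
    ∃ b : Blk G, 3 ≤ b.k ∧ ∀ x y, G.Adj x y → (b.π x ≠ b.π y ↔ H.Adj x y) := by
  obtain ⟨w, p, hp, rfl⟩ := walk_of_cyc hG H hH
  have hk : 3 ≤ p.length := hp.three_le_length
  set k := p.length with hkdef
  have : NeZero k := ⟨by omega⟩
  let s : ZMod k → V := fun i => p.getVert i.val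
  have hs : Function.Injective s := by
    intro i j hij
    have h1 := hp.getVert_injOn' (show i.val ≤ p.length - 1 by have := i.val_lt; omega)
      (show j.val ≤ p.length - 1 by have := j.val_lt; omega) hij
    exact ZMod.val_injective k h1
  have hnext : ∀ a : ℕ, a < k → s (a : ZMod k) = p.getVert a ∧ s ((a : ZMod k) + 1) = p.getVert (a + 1) := by
    intro a ha
    refine ⟨by simp only [s, ZMod.val_natCast, Nat.mod_eq_of_lt ha], ?_⟩
    have e : (a : ZMod k) + 1 = ((a + 1 : ℕ) : ZMod k) := by push_cast; rfl
    rw [e]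
    simp only [s, ZMod.val_natCast]
    rcases (show a + 1 < k ∨ a + 1 = k by omega) with h | h
    · rw [Nat.mod_eq_of_lt h]
    · rw [h, Nat.mod_self, hkdef, p.getVert_zero, p.getVert_length]
  have hcoe : ∀ i : ZMod k, s i = p.getVert i.val ∧ s (i + 1) = p.getVert (i.val + 1) := by
    intro i
    have := hnext i.val i.val_lt
    simpa using this
  have hHadj : ∀ i, p.toSubgraph.Adj (s i) (s (i + 1)) := by
    intro i
    rw [(hcoe i).1, (hcoe i).2]
    exact p.toSubgraph_adj_getVert i.val_lt
  have adj : ∀ i, G.Adj (s i) (s (i + 1)) := fun i => (hHadj i).adj_sub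
  let K := G.deleteEdges p.toSubgraph.edgeSet
  have hKadj : ∀ x y, G.Adj x y → (¬ K.Adj x y ↔ p.toSubgraph.Adj x y) := by
    intro x y hxy
    simp only [K, SimpleGraph.deleteEdges_adj, SimpleGraph.Subgraph.mem_edgeSet, hxy, true_and, not_not]
  obtain ⟨b, hb1, hb2⟩ := mk_blk hG.1 K (SimpleGraph.deleteEdges_le _) k (by omega) s adj (by
      intro x y hxy hn
      rw [hKadj x y hxy, SimpleGraph.Walk.toSubgraph_adj_iff] at hn
      obtain ⟨a, ha, ha2⟩ := hn
      refine ⟨(a : ZMod k), ?_⟩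
      rw [(hnext a ha2).1, (hnext a ha2).2]
      exact ha.symm) (by
      intro i j hij
      by_contra hne
      let e := s(s i, s (i + 1))
      let f := s(s j, s (j + 1))
      let G' := G.deleteEdges {f}
      have hG'le : G' ≤ G := SimpleGraph.deleteEdges_le _
      have heG : e ∈ G'.edgeSet := by
        simp only [G', e, f, SimpleGraph.mem_edgeSet, SimpleGraph.deleteEdges_adj, Set.mem_singleton_iff]
        exact ⟨adj i, fun h => hne (edge_inj k hk s hs _ _ h)⟩
      have hbr : G'.IsBridge e := by
        rw [SimpleGraph.isBridge_iff_forall_cycle_notMem heG]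
        intro u q hq heq
        have hc : (q.mapLe hG'le).IsCycle := hq.mapLe hG'le
        have h1 := cyc_same_edge hG _ p.toSubgraph (cyc_of_walk _ hc) (cyc_of_walk _ hp) (s i) (s (i + 1))
          (by rw [SimpleGraph.Walk.adj_toSubgraph_mapLe, SimpleGraph.Walk.adj_toSubgraph_iff_mem_edges]
              exact heq) (hHadj i)
        have h2 := hHadj j
        rw [← h1, SimpleGraph.Walk.adj_toSubgraph_mapLe] at h2
        have h3 := h2.adj_sub
        simp [G', f, SimpleGraph.deleteEdges_adj] at h3
      rw [SimpleGraph.isBridge_iff] at hbr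
      apply hbr
      have hKle : K ≤ G'.deleteEdges {e} := by
        intro x y hxy
        simp only [K, SimpleGraph.deleteEdges_adj] at hxy
        simp only [G', SimpleGraph.deleteEdges_adj, Set.mem_singleton_iff]
        refine ⟨⟨hxy.1, ?_⟩, ?_⟩
        · intro h; apply hxy.2; rw [h]; exact hHadj j
        · intro h; apply hxy.2; rw [h]; exact hHadj i
      refine (hij.mono hKle).trans ?_
      have harc : ∀ m : ℕ, m ≤ (j - (i + 1)).val →
          (G'.deleteEdges {e}).Reachable (s (i + 1)) (s (i + 1 + (m : ZMod k))) := by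
        intro m
        induction m with
        | zero => intro _; simp
        | succ m ih =>
          intro hm
          refine (ih (by omega)).trans (SimpleGraph.Adj.reachable ?_)
          have hlt := (j - (i + 1)).val_lt
          have e1 : i + 1 + ((m + 1 : ℕ) : ZMod k) = (i + 1 + (m : ZMod k)) + 1 := by push_cast; ring
          rw [e1]
          simp only [G', e, f, SimpleGraph.deleteEdges_adj, Set.mem_singleton_iff]
          refine ⟨⟨adj _, ?_⟩, ?_⟩
          · intro h
            have h := edge_inj k hk s hs _ _ h
            have h' : ((m : ℕ) : ZMod k) = j - (i + 1) := by linear_combination h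
            have := congrArg ZMod.val h'
            rw [ZMod.val_natCast, Nat.mod_eq_of_lt (by omega)] at this
            omega
          · intro h
            have h := edge_inj k hk s hs _ _ h
            have h' : ((m + 1 : ℕ) : ZMod k) = 0 := by push_cast; linear_combination h
            rw [ZMod.natCast_eq_zero_iff] at h'
            have := Nat.le_of_dvd (by omega) h'
            omega
      have := harc _ le_rfl
      rw [ZMod.natCast_zmod_val] at this
      simpa using this.symm)
  refine ⟨b, by omega, ?_⟩
  intro x y hxy
  rw [hb2 x y hxy, hKadj x y hxy]

end

lemma exists_dec.{u} {V : Type u} [Fintype V] [DecidableEq V] {G : SimpleGraph V} [DecidableRel G.Adj]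
    {n t : ℕ} (hG : MemCact n t G) :
    ∃ (β : Type u) (_ : Fintype β) (B : β → Blk G), Dec B n t := by
  classical
  obtain ⟨hC, hn, ht⟩ := hG
  let C := {H : G.Subgraph // IsCycleSubgraph H}
  let E := {e : Sym2 V // e ∈ G.edgeSet ∧ G.IsBridge e}
  have : Finite C := inferInstance
  have : Fintype C := Fintype.ofFinite C
  have hE : ∀ e : E, ∃ b : Blk G, b.k = 2 ∧ ∀ x y, G.Adj x y → (b.π x ≠ b.π y ↔ s(x, y) = e.1) := by
    rintro ⟨e, he1, he2⟩
    induction e with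
    | _ u v => exact blk_of_bridge hC.1 u v he1 he2
  choose BE hBE1 hBE2 using hE
  have hCy : ∀ H : C, ∃ b : Blk G, 3 ≤ b.k ∧ ∀ x y, G.Adj x y → (b.π x ≠ b.π y ↔ H.1.Adj x y) :=
    fun H => blk_of_cyc hC H.1 H.2
  choose BC hBC1 hBC2 using hCy
  refine ⟨C ⊕ E, inferInstance, Sum.elim BC BE, ?_, hC.1, ?_, ?_⟩
  · intro u v huv
    by_cases hb : G.IsBridge s(u, v)
    · refine ⟨Sum.inr ⟨s(u, v), huv, hb⟩, (hBE2 _ u v huv).2 rfl, ?_⟩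
      rintro (H | e) he
      · exfalso
        have := (hBC2 H u v huv).1 he
        obtain ⟨w, p, hp, hpH⟩ := walk_of_cyc hC H.1 H.2
        rw [← hpH, SimpleGraph.Walk.adj_toSubgraph_iff_mem_edges] at this
        exact hb.notMem_edges_of_isCycle hp this
      · have := (hBE2 e u v huv).1 he
        congr 1
        exact Subtype.ext this.symm
    · have hb' := hb
      rw [SimpleGraph.isBridge_iff_forall_cycle_notMem (show s(u, v) ∈ G.edgeSet from huv)] at hb'
      push Not at hb'
      obtain ⟨w, p, hp, hpe⟩ := hb'
      rw [← SimpleGraph.Walk.adj_toSubgraph_iff_mem_edges] at hpe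
      refine ⟨Sum.inl ⟨p.toSubgraph, cyc_of_walk p hp⟩, (hBC2 _ u v huv).2 hpe, ?_⟩
      rintro (H | e) he
      · have := (hBC2 H u v huv).1 he
        congr 1
        exact Subtype.ext (cyc_same_edge hC _ _ H.2 (cyc_of_walk p hp) u v this hpe)
      · exfalso
        have := (hBE2 e u v huv).1 he
        apply hb
        rw [this]
        exact e.2.2
  · rw [← hn, Nat.card_eq_fintype_card]
  · rw [← ht]
    unfold numCycles
    rw [← Nat.card_coe_set_eq]
    have h1 : (univ.filter fun b : C ⊕ E => (Sum.elim BC BE b).k ≠ 2) = univ.map Function.Embedding.inl := by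
      ext b
      rcases b with H | e
      · have := hBC1 H
        simp
        omega
      · have := hBE1 e
        simp [this]
    rw [h1, Finset.card_map, Finset.card_univ, ← Nat.card_eq_fintype_card]
    rfl

end CactusDR

set_option linter.unusedSectionVars false
set_option linter.unusedVariables false

namespace CactusDR

section

variable {V : Type*} [Fintype V] [DecidableEq V] {G : SimpleGraph V} [DecidableRel G.Adj]

lemma Blk.leaf_unique (b : Blk G) (i : ZMod b.k) (h : b.N i = 1) (v : V) (hv : b.π v = i) :
    v = b.s i := by
  unfold Blk.N at h
  rw [Finset.card_eq_one] at h
  obtain ⟨a, ha⟩ := h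
  have h1 : v ∈ ({a} : Finset V) := by rw [← ha]; simp [hv]
  have h2 : b.s i ∈ ({a} : Finset V) := by rw [← ha]; simp [b.πs]
  simp only [Finset.mem_singleton] at h1 h2
  rw [h1, h2]

lemma Blk.leaf_deg (b : Blk G) (i : ZMod b.k) (h : b.N i = 1) :
    (G.degree (b.s i) : ℝ) = b.dB := by
  have h1 := b.out_nbr (b.s i)
  rw [b.πs, if_pos rfl] at h1
  rw [← h1, ← G.card_neighborFinset_eq_degree]
  congr 2
  ext w
  simp only [SimpleGraph.mem_neighborFinset, Finset.mem_filter, iff_self_and]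
  intro hw hπ
  exact hw.ne (b.leaf_unique i h w hπ).symm

lemma Blk.D_one (b : Blk G) (i : ZMod b.k) (h : b.N i = 1) : b.D i = b.dB := by
  rw [← b.leaf_deg i h]
  unfold Blk.D
  have : (univ.filter fun v => b.π v = i) = {b.s i} := by
    ext v
    simp only [Finset.mem_filter, Finset.mem_univ, true_and, Finset.mem_singleton]
    exact ⟨b.leaf_unique i h v, fun h => by rw [h, b.πs]⟩
  rw [this, Finset.sum_singleton]

lemma Blk.two_fib (b : Blk G) (hG : G.Connected) (i : ZMod b.k) (h : b.N i = 2) :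
    ∃ d, d ≠ b.s i ∧ b.π d = i ∧ (∀ v, b.π v = i → v = b.s i ∨ v = d) ∧
      (∀ w, G.Adj d w ↔ w = b.s i) ∧ (G.degree d : ℝ) = 1 ∧
      (G.degree (b.s i) : ℝ) = b.dB + 1 ∧ b.D i = b.dB + 2 := by
  have hN := h
  unfold Blk.N at h
  have hmem : b.s i ∈ univ.filter fun v => b.π v = i := by simp [b.πs]
  obtain ⟨d, hd⟩ : ∃ d, (univ.filter fun v => b.π v = i) = {b.s i, d} ∧ d ≠ b.s i := by
    rw [← Finset.insert_erase hmem] at h ⊢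
    rw [Finset.card_insert_of_notMem (by simp)] at h
    obtain ⟨d, hd⟩ := Finset.card_eq_one.mp (Nat.succ.inj h)
    refine ⟨d, by rw [hd], ?_⟩
    have : d ∈ (univ.filter fun v => b.π v = i).erase (b.s i) := by rw [hd]; simp
    exact Finset.ne_of_mem_erase this
  obtain ⟨hf, hds⟩ := hd
  have hπd : b.π d = i := by
    have : d ∈ univ.filter fun v => b.π v = i := by rw [hf]; simp
    simpa using this
  have hall : ∀ v, b.π v = i → v = b.s i ∨ v = d := by
    intro v hv
    have : v ∈ univ.filter fun v => b.π v = i := by simp [hv]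
    rw [hf] at this
    simpa using this
  have hnb : ∀ w, G.Adj d w → w = b.s i := by
    intro w hw
    by_cases hπ : b.π d = b.π w
    · rcases hall w (by rw [← hπ, hπd]) with h | h
      · exact h
      · exact absurd h hw.ne.symm
    · have := (b.edge d w hw hπ).1
      rw [hπd] at this
      exact absurd this.symm hds
  have hr := b.fib_reach hG d
  rw [hπd] at hr
  have hadj : G.Adj d (b.s i) := by
    obtain ⟨p⟩ := hr.symm
    cases p with
    | nil => exact absurd rfl hds
    | cons h p => have := h.1; rwa [hnb _ this] at this
  have hiff : ∀ w, G.Adj d w ↔ w = b.s i := fun w => ⟨hnb w, fun h => h ▸ hadj⟩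
  have hdd : (G.degree d : ℝ) = 1 := by
    have : G.neighborFinset d = {b.s i} := by ext w; simp [hiff]
    rw [← G.card_neighborFinset_eq_degree, this]; simp
  have hda : (G.degree (b.s i) : ℝ) = b.dB + 1 := by
    have h1 := b.out_nbr (b.s i)
    rw [b.πs, if_pos rfl] at h1
    rw [← h1, ← G.card_neighborFinset_eq_degree,
      ← Finset.card_filter_add_card_filter_not (s := G.neighborFinset (b.s i)) (fun w => b.π w = i)]
    have : (G.neighborFinset (b.s i)).filter (fun w => b.π w = i) = {d} := by
      ext w
      simp only [Finset.mem_filter, SimpleGraph.mem_neighborFinset, Finset.mem_singleton]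
      constructor
      · rintro ⟨h1, h2⟩
        rcases hall w h2 with h | h
        · exact absurd h h1.ne.symm
        · exact h
      · rintro rfl; exact ⟨hadj.symm, hπd⟩
    rw [this]
    push_cast
    simp
    ring
  refine ⟨d, hds, hπd, hall, hiff, hdd, hda, ?_⟩
  unfold Blk.D
  rw [hf, Finset.sum_pair hds.symm, hdd, hda]
  ring

end

lemma costF_conc2 (n t : ℕ) (k : ℕ) [NeZero k] (hk : k = 2)
    (N : ZMod k → ℕ) (D : ZMod k → ℝ) (hNs : ∑ i, N i = n) (hc : Conc N)
    (hD : ∀ i, N i = 1 → D i = 1) (hDs : ∑ i, D i = 2 * ((n : ℝ) - 1 + t)) :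
    costF k N D = baseK k n t := by
  subst hk
  have h01 : (0 : ZMod 2) ≠ 1 := by decide
  have r1 : res 2 1 = 1 := by
    have := res_natCast 2 le_rfl 1 (by norm_num)
    norm_num at this
    exact this
  unfold costF baseK
  rw [univ_zmod2] at hNs hDs ⊢
  simp only [Finset.sum_pair h01] at hNs hDs ⊢
  have e1 : (0 : ZMod 2) - 1 = 1 := by decide
  have e2 : (1 : ZMod 2) - 0 = 1 := by decide
  simp only [sub_self, res_zero, e1, e2, r1, if_true, c2]
  have hs : (N 0 : ℝ) + N 1 = n := by exact_mod_cast hNs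
  obtain ⟨i, hi⟩ := hc
  have hcase : ∀ i : ZMod 2, i = 0 ∨ i = 1 := by decide
  rcases hcase i with rfl | rfl
  · have h1 := hi 1 h01.symm
    have h2 := hD 1 h1
    rw [h1] at hs ⊢
    rw [h2] at hDs ⊢
    push_cast at *
    have e3 : (N 0 : ℝ) = n - 1 := by linarith
    have e4 : D 0 = 2 * ((n : ℝ) - 1 + t) - 1 := by linarith
    rw [e3, e4]; ring
  · have h1 := hi 0 h01
    have h2 := hD 0 h1
    rw [h1] at hs ⊢
    rw [h2] at hDs ⊢
    push_cast at *
    have e3 : (N 1 : ℝ) = n - 1 := by linarith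
    have e4 : D 1 = 2 * ((n : ℝ) - 1 + t) - 1 := by linarith
    rw [e3, e4]; ring

lemma costF_conc3 (n t : ℕ) (k : ℕ) [NeZero k] (hk : k = 3)
    (N : ZMod k → ℕ) (D : ZMod k → ℝ) (hNs : ∑ i, N i = n) (hc : Conc N)
    (hD : ∀ i, N i = 1 → D i = 2) (hDs : ∑ i, D i = 2 * ((n : ℝ) - 1 + t)) :
    costF k N D = baseK k n t := by
  have hNs' : ∑ i, (N i : ℝ) = n := by exact_mod_cast hNs
  have hexp := costF_expand k (by omega) N (fun i => (N i : ℝ) - 1) (fun i => D i - 2 * N i) D n t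
    (fun i => by ring) (fun i => by ring) (by
      simp only [Finset.sum_sub_distrib, hNs']; simp) (by
      simp only [Finset.sum_sub_distrib, ← Finset.mul_sum, hNs', hDs]; ring)
  obtain ⟨z, hz⟩ := hc
  have h0 : ∑ i, ∑ j, (2 * ((N i : ℝ) - 1) + (D i - 2 * N i)) * ((N j : ℝ) - 1) * res k (i - j) = 0 := by
    apply Finset.sum_eq_zero; intro i _
    apply Finset.sum_eq_zero; intro j _
    by_cases hj : j = z
    · by_cases hi : i = z
      · rw [hi, hj, sub_self, res_zero, mul_zero]
      · rw [hD i (hz i hi), hz i hi]; norm_num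
    · rw [hz j hj]; norm_num
  rw [hexp, h0]
  simp only [baseK, c3, c2, hk]
  norm_num
  ring

lemma costF_spec3 (n t : ℕ) (k : ℕ) [NeZero k] (hk : k = 3)
    (N : ZMod k → ℕ) (D : ZMod k → ℝ) (hNs : ∑ i, N i = n)
    (hc : ∃ i j, i ≠ j ∧ N i = 1 ∧ N j = 2)
    (hD : ∀ i, N i = 1 → D i = 2) (hD2 : ∀ i, N i = 2 → D i = 4)
    (hDs : ∑ i, D i = 2 * ((n : ℝ) - 1 + t)) :
    costF k N D = baseK k n t + Del n t := by
  have hNs' : ∑ i, (N i : ℝ) = n := by exact_mod_cast hNs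
  have hX : ∑ i, ((N i : ℝ) - 1) = n - k := by
    simp only [Finset.sum_sub_distrib, hNs']; simp
  have hT : ∑ i, (D i - 2 * N i) = 2 * ((t : ℝ) - 1) := by
      simp only [Finset.sum_sub_distrib, ← Finset.mul_sum, hNs', hDs]; ring
  have hexp := costF_expand k (by omega) N (fun i => (N i : ℝ) - 1) (fun i => D i - 2 * N i) D n t
    (fun i => by ring) (fun i => by ring) hX hT
  obtain ⟨i, j, hij, hi, hj⟩ := hc
  rw [hexp]
  have xi : (N i : ℝ) - 1 = 0 := by rw [hi]; norm_num
  have xj : (N j : ℝ) - 1 = 1 := by rw [hj]; norm_num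
  have Ti : D i - 2 * N i = 0 := by rw [hD i hi, hi]; norm_num
  have Tj : D j - 2 * N j = 0 := by rw [hD2 j hj, hj]; norm_num
  subst hk
  generalize hx : (fun i => (N i : ℝ) - 1) = x at *
  generalize hTT : (fun i => D i - 2 * (N i : ℝ)) = T at *
  have hx' : ∀ i, (N i : ℝ) - 1 = x i := fun i => by rw [← hx]
  have hT' : ∀ i, D i - 2 * (N i : ℝ) = T i := fun i => by rw [← hTT]
  simp only [hx', hT'] at *
  have r1 : res 3 1 = 2 / 3 := by
    have := res_natCast 3 (by norm_num) 1 (by norm_num)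
    norm_num at this
    exact this
  have r2 : res 3 2 = 2 / 3 := by
    have := res_natCast 3 (by norm_num) 2 (by norm_num)
    norm_num at this
    exact this
  have a1 : (0 : ZMod 3) ∉ ({1, 2} : Finset (ZMod 3)) := by decide
  have a2 : (1 : ZMod 3) ∉ ({2} : Finset (ZMod 3)) := by decide
  have e1 : (0 : ZMod 3) - 1 = 2 := by decide
  have e2 : (0 : ZMod 3) - 2 = 1 := by decide
  have e3 : (1 : ZMod 3) - 2 = 2 := by decide
  have e4 : (2 : ZMod 3) - 1 = 1 := by decide
  rw [univ_zmod3] at hX hT ⊢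
  simp only [Finset.sum_insert a1, Finset.sum_insert a2, Finset.sum_singleton, sub_self, res_zero,
    sub_zero, e1, e2, e3, e4, r1, r2] at hX hT ⊢
  simp only [baseK, c3, c2, Del]
  norm_num at hX ⊢
  have hcase : ∀ i : ZMod 3, i = 0 ∨ i = 1 ∨ i = 2 := by decide
  rcases hcase i with rfl | rfl | rfl <;> rcases hcase j with rfl | rfl | rfl <;>
    first
    | exact absurd rfl hij
    | (rw [xi, xj] at hX; rw [Ti, Tj] at hT; rw [xi, xj, Ti, Tj]; linarith)

section

variable {V : Type*} [Fintype V] [DecidableEq V] {G : SimpleGraph V} [DecidableRel G.Adj]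
  {β : Type*} [Fintype β] {B : β → Blk G} {n t : ℕ}

lemma Dec.cost_conc (hd : Dec B n t) (b : β) (hk : (B b).k ≤ 3) (hc : Conc (B b).N) :
    (B b).cost = baseK (B b).k n t := by
  have hNs := (B b).sum_N
  have hDs := (B b).sum_D
  rw [hd.card] at hNs
  rw [hd.sum_deg] at hDs
  have h1 := (B b).D_one
  unfold Blk.dB at h1
  by_cases h : (B b).k = 2
  · rw [if_pos h] at h1
    exact costF_conc2 n t _ h _ _ hNs hc h1 hDs
  · rw [if_neg h] at h1
    exact costF_conc3 n t _ (by have := (B b).two_le; omega) _ _ hNs hc h1 hDs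

lemma Dec.cost_spec (hd : Dec B n t) (b : β) (hk : (B b).k = 3)
    (hc : ∃ i j, i ≠ j ∧ (B b).N i = 1 ∧ (B b).N j = 2) :
    (B b).cost = baseK (B b).k n t + Del n t := by
  have hNs := (B b).sum_N
  have hDs := (B b).sum_D
  rw [hd.card] at hNs
  rw [hd.sum_deg] at hDs
  have h1 := (B b).D_one
  have h2 : ∀ i, (B b).N i = 2 → (B b).D i = 4 := by
    intro i hi
    obtain ⟨d, -, -, -, -, -, -, h⟩ := (B b).two_fib hd.conn i hi
    rw [h, Blk.dB, if_neg (by omega)]; norm_num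
  unfold Blk.dB at h1
  rw [if_neg (by omega)] at h1
  exact costF_spec3 n t _ hk _ _ hNs hc h1 h2 hDs

end

end CactusDR

set_option linter.unusedSectionVars false
set_option linter.unusedVariables false

namespace CactusDR

/-- the (asymmetric) relation defining `G4g`, on naturals -/
def r4 (t a b : ℕ) : Prop := (a = 0 ∧ b ≠ 2 * t + 1) ∨
    (∃ m, a = 2 * m + 1 ∧ b = 2 * m + 2 ∧ m < t) ∨ (a = 1 ∧ b = 2 * t + 1)

lemma G4g_adj (n t : ℕ) (u v : Fin n) :
    (G4g n t).Adj u v ↔ u.val ≠ v.val ∧ (r4 t u.val v.val ∨ r4 t v.val u.val) := by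
  have key : ∀ a b : ℕ, (Odd a ∧ b = a + 1 ∧ b ≤ 2 * t) ↔
      (∃ m, a = 2 * m + 1 ∧ b = 2 * m + 2 ∧ m < t) := by
    intro a b
    constructor
    · rintro ⟨⟨m, hm⟩, h2, h3⟩
      exact ⟨m, by omega, by omega, by omega⟩
    · rintro ⟨m, h1, h2, h3⟩
      exact ⟨⟨m, by omega⟩, by omega, by omega⟩
  unfold G4g r4
  rw [SimpleGraph.fromRel_adj]
  simp only [key, Fin.val_ne_iff]

def pT (t i v : ℕ) : ZMod 3 :=
  if v = 2 * i + 1 then 1 else if v = 2 * i + 2 then 2 else if i = 0 ∧ v = 2 * t + 1 then 1 else 0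

def pE (t j v : ℕ) : ZMod 2 := if v = 2 * t + 1 + j then 1 else 0

lemma z3ne : (0 : ZMod 3) ≠ 1 ∧ (0 : ZMod 3) ≠ 2 ∧ (1 : ZMod 3) ≠ 2 ∧ (1 : ZMod 3) ≠ 0 ∧
  (2 : ZMod 3) ≠ 0 ∧ (2 : ZMod 3) ≠ 1 := by decide

lemma pT_sep (t i : ℕ) (hi : i < t) (a b : ℕ) (h : r4 t a b) (hab : a ≠ b) :
    pT t i a ≠ pT t i b ↔ ((a = 0 ∧ (b = 2 * i + 1 ∨ b = 2 * i + 2)) ∨ (a = 2 * i + 1 ∧ b = 2 * i + 2)) := by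
  obtain ⟨n1, n2, n3, n4, n5, n6⟩ := z3ne
  rcases h with ⟨h1, h2⟩ | ⟨m, h1, h2, h3⟩ | ⟨h1, h2⟩
  · subst h1
    unfold pT
    rw [if_neg (by omega), if_neg (by omega), if_neg (by omega)]
    split_ifs <;> simp_all
  · subst h1 h2
    by_cases hm : m = i
    · subst hm; simp [pT, n3]
    · unfold pT
      rw [if_neg (by omega), if_neg (by omega), if_neg (by omega), if_neg (by omega),
        if_neg (by omega), if_neg (by omega)]
      simp; omega
  · subst h1 h2
    unfold pT
    by_cases hi0 : i = 0
    · subst hi0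
      simp
    · rw [if_neg (by omega), if_neg (by omega), if_neg (by omega), if_neg (by omega),
        if_neg (by omega), if_neg (by omega)]
      simp; omega

lemma pE_sep (t j : ℕ) (a b : ℕ) (h : r4 t a b) (hab : a ≠ b) :
    pE t j a ≠ pE t j b ↔ (b = 2 * t + 1 + j) := by
  have n1 : (0 : ZMod 2) ≠ 1 := by decide
  have ha : a ≠ 2 * t + 1 + j := by
    rcases h with ⟨h1, h2⟩ | ⟨m, h1, h2, h3⟩ | ⟨h1, h2⟩ <;> omega
  unfold pE
  rw [if_neg ha]
  split_ifs with hb <;> simp [hb]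

variable (n t : ℕ)

lemma z3cases : ∀ i : ZMod 3, i = 0 ∨ i = 1 ∨ i = 2 := by decide
lemma z2cases : ∀ i : ZMod 2, i = 0 ∨ i = 1 := by decide
lemma z3pm : ∀ i j : ZMod 3, i ≠ j → (j = i + 1 ∨ j = i - 1) := by decide
lemma z2pm : ∀ i j : ZMod 2, i ≠ j → (j = i + 1 ∨ j = i - 1) := by decide

/-- triangles of `G4g` -/
def blkT (hn : 2 * t + 1 ≤ n) (i : ℕ) (hi : i < t) : Blk (G4g n t) where
  k := 3
  two_le := by norm_num
  s := fun j => if j = 0 then ⟨0, by omega⟩ else if j = 1 then ⟨2 * i + 1, by omega⟩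
    else ⟨2 * i + 2, by omega⟩
  π := fun v => pT t i v.val
  πs := by
    obtain ⟨n1, n2, n3, n4, n5, n6⟩ := z3ne
    intro j
    rcases z3cases j with rfl | rfl | rfl <;> simp [pT, n5, n6]
  adj := by
    obtain ⟨n1, n2, n3, n4, n5, n6⟩ := z3ne
    intro j
    rw [G4g_adj]
    have e1 : (1 : ZMod 3) + 1 = 2 := by decide
    have e2 : (2 : ZMod 3) + 1 = 0 := by decide
    rcases z3cases j with rfl | rfl | rfl <;> simp [e1, e2, n5, n6, r4]
    · omega
    · exact Or.inl (Or.inl hi)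
    · omega
  edge := by
    intro u v huv hne
    refine ⟨?_, z3pm _ _ hne⟩
    obtain ⟨n1, n2, n3, n4, n5, n6⟩ := z3ne
    rw [G4g_adj] at huv
    obtain ⟨hne', h | h⟩ := huv
    · rw [pT_sep t i hi _ _ h hne'] at hne
      rcases hne with ⟨h1, h2⟩ | ⟨h1, h2⟩
      · have : pT t i u.val = 0 := by
          unfold pT; rw [if_neg (by omega), if_neg (by omega), if_neg (by omega)]
        rw [this]; simp; apply Fin.ext; simp [h1]
      · have : pT t i u.val = 1 := by
          unfold pT; rw [if_pos (by omega)]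
        rw [this]; simp; apply Fin.ext; simp [h1]
    · rw [ne_comm, pT_sep t i hi _ _ h hne'.symm] at hne
      rcases hne with ⟨h1, h2 | h2⟩ | ⟨h1, h2⟩
      · have : pT t i u.val = 1 := by
          unfold pT; rw [if_pos (by omega)]
        rw [this]; simp; apply Fin.ext; simp [h2]
      · have : pT t i u.val = 2 := by
          unfold pT; rw [if_neg (by omega), if_pos (by omega)]
        rw [this]; simp [n5, n6]; apply Fin.ext; simp [h2]
      · have : pT t i u.val = 2 := by
          unfold pT; rw [if_neg (by omega), if_pos (by omega)]
        rw [this]; simp [n5, n6]; apply Fin.ext; simp [h2]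

/-- pendent edges of `G4g` -/
def blkE (ht : 1 ≤ t) (j : ℕ) (hj : j < n - 1 - 2 * t) : Blk (G4g n t) where
  k := 2
  two_le := le_rfl
  s := fun i => if i = 0 then (if j = 0 then ⟨1, by omega⟩ else ⟨0, by omega⟩)
    else ⟨2 * t + 1 + j, by omega⟩
  π := fun v => pE t j v.val
  πs := by
    intro i
    rcases z2cases i with rfl | rfl
    · by_cases h : j = 0
      · simp [pE, h]; omega
      · simp [pE, h]; omega
    · simp [pE]
  adj := by
    intro i
    rw [G4g_adj]
    have e1 : (1 : ZMod 2) + 1 = 0 := by decide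
    rcases z2cases i with rfl | rfl <;> by_cases h : j = 0 <;> simp [e1, h, r4]
    all_goals omega
  edge := by
    intro u v huv hne
    refine ⟨?_, z2pm _ _ hne⟩
    rw [G4g_adj] at huv
    obtain ⟨hne', h | h⟩ := huv
    · rw [pE_sep t j _ _ h hne'] at hne
      have : pE t j u.val = 0 := by
        unfold pE; rw [if_neg (by omega)]
      rw [this]
      apply Fin.ext
      simp
      rcases h with ⟨h1, h2⟩ | ⟨m, h1, h2, h3⟩ | ⟨h1, h2⟩ <;>
        split_ifs with h0 <;> simp <;> omega
    · rw [ne_comm, pE_sep t j _ _ h hne'.symm] at hne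
      have : pE t j u.val = 1 := by
        unfold pE; rw [if_pos hne]
      rw [this]
      apply Fin.ext
      simp [hne]

variable {n t}

lemma G4g_conn (hn : 2 * t + 1 ≤ n) (ht : 1 ≤ t) : (G4g n t).Connected := by
  rw [SimpleGraph.connected_iff_exists_forall_reachable]
  refine ⟨⟨0, by omega⟩, ?_⟩
  have h1 : ∀ v : Fin n, v.val ≠ 2 * t + 1 → (G4g n t).Reachable ⟨0, by omega⟩ v := by
    intro v hv
    by_cases h0 : v.val = 0
    · have : v = ⟨0, by omega⟩ := Fin.ext h0
      rw [this]
    · apply SimpleGraph.Adj.reachable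
      rw [G4g_adj]
      exact ⟨Ne.symm h0, Or.inl (Or.inl ⟨rfl, hv⟩)⟩
  intro v
  by_cases hv : v.val = 2 * t + 1
  · refine (h1 ⟨1, by omega⟩ (by simp; omega)).trans (SimpleGraph.Adj.reachable ?_)
    rw [G4g_adj]
    exact ⟨by simp; omega, Or.inl (Or.inr (Or.inr ⟨rfl, hv⟩))⟩
  · exact h1 v hv

def blks (hn : 2 * t + 1 ≤ n) (ht : 1 ≤ t) : Fin t ⊕ Fin (n - 1 - 2 * t) → Blk (G4g n t) :=
  Sum.elim (fun i => blkT n t hn i.val i.isLt) (fun j => blkE n t ht j.val j.isLt)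

lemma blks_cover (hn : 2 * t + 1 ≤ n) (ht : 1 ≤ t) : Cover (blks hn ht) := by
  have main : ∀ u v : Fin n, u.val ≠ v.val → r4 t u.val v.val →
      ∃! b, (blks hn ht b).π u ≠ (blks hn ht b).π v := by
    intro u v hne h
    have hT : ∀ i : Fin t, (blks hn ht (Sum.inl i)).π u ≠ (blks hn ht (Sum.inl i)).π v ↔
      ((u.val = 0 ∧ (v.val = 2 * i.val + 1 ∨ v.val = 2 * i.val + 2)) ∨
        (u.val = 2 * i.val + 1 ∧ v.val = 2 * i.val + 2)) :=
      fun i => pT_sep t i.val i.isLt _ _ h hne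
    have hE : ∀ j : Fin (n - 1 - 2 * t), (blks hn ht (Sum.inr j)).π u ≠ (blks hn ht (Sum.inr j)).π v ↔
        v.val = 2 * t + 1 + j.val := fun j => pE_sep t j.val _ _ h hne
    by_cases hv : 2 * t + 1 ≤ v.val
    · refine ⟨Sum.inr ⟨v.val - (2 * t + 1), by omega⟩, ?_, ?_⟩
      · show _ ≠ _
        rw [hE]; simp; omega
      · rintro (i | j) hb
        · have hb := (hT i).1 hb
          omega
        · have hb := (hE j).1 hb
          congr 1
          apply Fin.ext
          simp; omega
    · have hv1 : 1 ≤ v.val := by unfold r4 at h; omega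
      refine ⟨Sum.inl ⟨(v.val - 1) / 2, by omega⟩, ?_, ?_⟩
      · show _ ≠ _
        rw [hT]; simp
        unfold r4 at h
        rcases h with ⟨h1, h2⟩ | ⟨m, h1, h2, h3⟩ | ⟨h1, h2⟩ <;> omega
      · rintro (i | j) hb
        · have hb := (hT i).1 hb
          congr 1
          apply Fin.ext
          simp; omega
        · have hb := (hE j).1 hb
          omega
  intro u v huv
  rw [G4g_adj] at huv
  obtain ⟨hne, h | h⟩ := huv
  · exact main u v hne h
  · obtain ⟨b, hb, hb'⟩ := main v u hne.symm h
    exact ⟨b, Ne.symm hb, fun c hc => hb' c (Ne.symm hc)⟩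

lemma blks_dec [DecidableRel (G4g n t).Adj] (hn : 2 * t + 1 ≤ n) (ht : 1 ≤ t) : Dec (blks hn ht) n t := by
  refine ⟨blks_cover hn ht, G4g_conn hn ht, by simp, ?_⟩
  have h1 : (univ.filter fun b => (blks hn ht b).k ≠ 2) = univ.map Function.Embedding.inl := by
    ext b
    rcases b with i | j
    · have : (blks hn ht (Sum.inl i)).k = 3 := rfl
      simp [this]
    · have : (blks hn ht (Sum.inr j)).k = 2 := rfl
      simp [this]
  rw [h1, Finset.card_map, Finset.card_univ, Fintype.card_fin]

lemma degRes_G4g_le (hn : 25 ≤ n) (hnt : 2 * t + 1 ≤ n) (ht : 1 ≤ t) :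
    degRes (G4g n t) ≤ base n t + Del n t := by
  classical
  have hd := blks_dec hnt ht
  rw [degRes_blk _ hd.cov hd.conn, ← hd.sum_base]
  have hDel : 0 ≤ Del n t := by
    unfold Del
    have h1 : (25 : ℝ) ≤ n := by exact_mod_cast hn
    have h2 : (1 : ℝ) ≤ t := by exact_mod_cast ht
    linarith
  have hb : ∀ b, (blks hnt ht b).cost ≤ baseK (blks hnt ht b).k n t +
      (if b = Sum.inl ⟨0, by omega⟩ then Del n t else 0) := by
    obtain ⟨n1, n2, n3, n4, n5, n6⟩ := z3ne
    rintro (i | j)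
    · have hN2 : (blks hnt ht (Sum.inl i)).N (2 : ZMod 3) = 1 := by
        unfold Blk.N
        rw [Finset.card_eq_one]
        refine ⟨⟨2 * i.val + 2, by omega⟩, ?_⟩
        ext v
        simp only [Finset.mem_filter, Finset.mem_univ, true_and, Finset.mem_singleton, Fin.ext_iff]
        show pT t i.val v.val = 2 ↔ _
        unfold pT
        split_ifs with h1 h2 h3 <;> simp [n1, n2, n3] <;> omega
      by_cases hi : i.val = 0 ∧ 2 * t + 2 ≤ n
      · have : i = ⟨0, by omega⟩ := Fin.ext hi.1
        rw [if_pos (by rw [this])]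
        apply le_of_eq
        apply hd.cost_spec _ rfl
        refine ⟨(2 : ZMod 3), (1 : ZMod 3), n6, hN2, ?_⟩
        unfold Blk.N
        rw [Finset.card_eq_two]
        refine ⟨⟨2 * i.val + 1, by omega⟩, ⟨2 * t + 1, by omega⟩, by simp; omega, ?_⟩
        ext v
        simp only [Finset.mem_filter, Finset.mem_univ, true_and, Finset.mem_singleton, Finset.mem_insert, Fin.ext_iff]
        show pT t i.val v.val = 1 ↔ _
        unfold pT
        split_ifs with h1 h2 h3 <;> simp [n1, n6] <;> omega
      · rw [hd.cost_conc]
        · split_ifs <;> linarith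
        · show 3 ≤ 3; norm_num
        · refine ⟨(0 : ZMod 3), ?_⟩
          intro j hj
          rcases z3cases j with h | h | h
          · exact absurd h hj
          · rw [h]
            unfold Blk.N
            rw [Finset.card_eq_one]
            refine ⟨⟨2 * i.val + 1, by omega⟩, ?_⟩
            ext v
            simp only [Finset.mem_filter, Finset.mem_univ, true_and, Finset.mem_singleton, Fin.ext_iff]
            show pT t i.val v.val = 1 ↔ _
            unfold pT
            split_ifs with h1 h2 h3 <;> simp [n1, n6] <;> omega
          · rw [h]; exact hN2
    · rw [if_neg (by simp), add_zero]
      apply le_of_eq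
      apply hd.cost_conc
      · show 2 ≤ 3; norm_num
      · refine ⟨(0 : ZMod 2), ?_⟩
        intro i hi
        rcases z2cases i with h | h
        · exact absurd h hi
        · rw [h]
          unfold Blk.N
          rw [Finset.card_eq_one]
          refine ⟨⟨2 * t + 1 + j.val, by omega⟩, ?_⟩
          ext v
          simp only [Finset.mem_filter, Finset.mem_univ, true_and, Finset.mem_singleton, Fin.ext_iff]
          show pE t j.val v.val = 1 ↔ _
          unfold pE
          split_ifs with h1 <;> simp [h1]
  refine le_trans (Finset.sum_le_sum fun b _ => hb b) ?_
  rw [Finset.sum_add_distrib]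
  simp

end CactusDR

set_option linter.unusedSectionVars false
set_option linter.unusedVariables false

namespace CactusDR
universe u v

lemma iso_degree {V : Type u} {W : Type v} [Fintype V] [Fintype W]
    {G : SimpleGraph V} {H : SimpleGraph W} [DecidableRel G.Adj] [DecidableRel H.Adj]
    (e : G ≃g H) (a : V) : H.degree (e a) = G.degree a := by
  rw [← SimpleGraph.card_neighborSet_eq_degree, ← SimpleGraph.card_neighborSet_eq_degree]
  exact (Fintype.card_congr (e.mapNeighborSet a)).symm

lemma lap_iso {V : Type u} {W : Type v} [Fintype V] [Fintype W] [DecidableEq V] [DecidableEq W]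
    {G : SimpleGraph V} {H : SimpleGraph W} [DecidableRel G.Adj] [DecidableRel H.Adj]
    (e : G ≃g H) (a b : V) : H.lapMatrix ℝ (e a) (e b) = G.lapMatrix ℝ a b := by
  unfold SimpleGraph.lapMatrix SimpleGraph.degMatrix
  simp only [Matrix.sub_apply, Matrix.diagonal_apply, SimpleGraph.adjMatrix_apply, iso_degree,
    e.map_adj_iff, EmbeddingLike.apply_eq_iff_eq]

lemma effRes_iso {V : Type u} {W : Type v} [Finite V] [Finite W]
    {G : SimpleGraph V} {H : SimpleGraph W} (e : G ≃g H) (a b : V) :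
    effRes H (e a) (e b) = effRes G a b := by
  let _ := Fintype.ofFinite V
  let _ := Fintype.ofFinite W
  let _ := Classical.decEq V
  let _ := Classical.decEq W
  let _ : DecidableRel G.Adj := Classical.decRel _
  let _ : DecidableRel H.Adj := Classical.decRel _
  dsimp only [effRes]
  by_cases hab : a = b
  · simp [hab]
  rw [if_neg hab, if_neg (fun h => hab (e.injective h))]
  congr 1
  · let f : {w : V // w ≠ a ∧ w ≠ b} ≃ {w : W // w ≠ e a ∧ w ≠ e b} :=
      e.toEquiv.subtypeEquiv (fun w => by simp)
    rw [← Matrix.det_submatrix_equiv_self f]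
    congr 1
    ext x y
    exact lap_iso e _ _
  · let f : {w : V // w ≠ a} ≃ {w : W // w ≠ e a} :=
      e.toEquiv.subtypeEquiv (fun w => by simp)
    rw [← Matrix.det_submatrix_equiv_self f]
    congr 1
    ext x y
    exact lap_iso e _ _

lemma degRes_iso {V : Type u} {W : Type v} [Finite V] [Finite W]
    {G : SimpleGraph V} {H : SimpleGraph W} (e : G ≃g H) : degRes G = degRes H := by
  let _ := Fintype.ofFinite V
  let _ := Fintype.ofFinite W
  let _ := Classical.decEq V
  let _ := Classical.decEq W
  let _ : DecidableRel G.Adj := Classical.decRel _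
  let _ : DecidableRel H.Adj := Classical.decRel _
  dsimp only [degRes]
  congr 1
  refine Fintype.sum_equiv e.toEquiv _ _ fun a => ?_
  refine Fintype.sum_equiv e.toEquiv _ _ fun b => ?_
  show _ = _ * effRes H (e a) (e b)
  rw [effRes_iso]
  congr 2
  · congr 1; exact (iso_degree e a).symm
  · congr 1; exact (iso_degree e b).symm

end CactusDR

set_option linter.unusedSectionVars false
set_option linter.unusedVariables false

namespace CactusDR
universe u

/-- the model involution -/
def s0f (t a : ℕ) : ℕ := if a = 0 ∨ 2 * t < a then a else if a % 2 = 1 then a + 1 else a - 1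

lemma s0f_inv (t a : ℕ) : s0f t (s0f t a) = a := by
  by_cases h : a = 0 ∨ 2 * t < a
  · have : s0f t a = a := by unfold s0f; rw [if_pos h]
    rw [this, this]
  · by_cases h2 : a % 2 = 1
    · have : s0f t a = a + 1 := by unfold s0f; rw [if_neg h, if_pos h2]
      rw [this]; unfold s0f; rw [if_neg (by omega), if_neg (by omega)]; omega
    · have : s0f t a = a - 1 := by unfold s0f; rw [if_neg h, if_neg h2]
      rw [this]; unfold s0f; rw [if_neg (by omega), if_pos (by omega)]; omega

lemma s0f_lt (n t a : ℕ) (h : 2 * t + 1 ≤ n) (ha : a < n) : s0f t a < n := by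
  unfold s0f; split_ifs <;> omega

def s0 (n t : ℕ) (h : 2 * t + 1 ≤ n) : Equiv.Perm (Fin n) :=
  Function.Involutive.toPerm (fun a => ⟨s0f t a.val, s0f_lt n t _ h a.isLt⟩)
    (fun a => Fin.ext (s0f_inv t a.val))

lemma s0_val (n t : ℕ) (h : 2 * t + 1 ≤ n) (a : Fin n) : (s0 n t h a).val = s0f t a.val := rfl

lemma s0_inv (n t : ℕ) (h : 2 * t + 1 ≤ n) (a : Fin n) : s0 n t h (s0 n t h a) = a :=
  Fin.ext (s0f_inv t a.val)

lemma s0_support (n t : ℕ) (h : 2 * t + 1 ≤ n) : (s0 n t h).support.card = 2 * t := by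
  have : (s0 n t h).support.map Fin.valEmbedding = Finset.Icc 1 (2 * t) := by
    ext a
    simp only [Finset.mem_map, Equiv.Perm.mem_support, Finset.mem_Icc, Fin.valEmbedding_apply]
    constructor
    · rintro ⟨x, hx, rfl⟩
      have : s0f t x.val ≠ x.val := fun h' => hx (Fin.ext h')
      unfold s0f at this
      split_ifs at this <;> omega
    · rintro ⟨h1, h2⟩
      refine ⟨⟨a, by omega⟩, ?_, rfl⟩
      intro h'
      have h' : s0f t a = a := congrArg Fin.val h'
      unfold s0f at h'
      split_ifs at h' <;> omega
  rw [← Finset.card_map Fin.valEmbedding, this]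
  simp

lemma cycleType_inv {X : Type*} [Fintype X] [DecidableEq X] (σ : Equiv.Perm X)
    (h : ∀ x, σ (σ x) = x) (t : ℕ) (hs : σ.support.card = 2 * t) :
    σ.cycleType = Multiset.replicate t 2 := by
  have h1 : σ ^ 2 = 1 := by ext x; simp [pow_two, h]
  have : Fact (Nat.Prime 2) := ⟨Nat.prime_two⟩
  rw [Equiv.Perm.pow_prime_eq_one_iff] at h1
  have h2 : σ.cycleType = Multiset.replicate (Multiset.card σ.cycleType) 2 :=
    Multiset.eq_replicate.2 ⟨rfl, h1⟩
  have h3 := σ.sum_cycleType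
  rw [h2, Multiset.sum_replicate, hs] at h3
  have : Multiset.card σ.cycleType = t := by simp at h3; omega
  rw [h2, this]

lemma exists_conj {V : Type u} [Fintype V] [DecidableEq V] (n t : ℕ) (h : 2 * t + 1 ≤ n)
    (hV : Fintype.card V = n) (σ : Equiv.Perm V) (hσ : ∀ x, σ (σ x) = x)
    (hs : σ.support.card = 2 * t) :
    ∃ e : V ≃ Fin n, ∀ v, e (σ v) = s0 n t h (e v) := by
  let f : V ≃ Fin n := Fintype.equivFinOfCardEq hV
  let τ : Equiv.Perm (Fin n) := f.permCongr σ
  have hτ : ∀ x, τ (τ x) = x := by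
    intro x; simp [τ, hσ]
  have hτs : τ.support.card = 2 * t := by
    rw [← hs, ← Finset.card_map f.toEmbedding]
    congr 1
    ext x
    simp only [Finset.mem_map, Equiv.Perm.mem_support, Equiv.coe_toEmbedding]
    constructor
    · intro hx
      refine ⟨f.symm x, ?_, by simp⟩
      intro h'
      apply hx
      simp [τ, h']
    · rintro ⟨y, hy, rfl⟩ h'
      apply hy
      simpa [τ] using h'
  have hc : IsConj τ (s0 n t h) := by
    rw [Equiv.Perm.isConj_iff_cycleType_eq, cycleType_inv τ hτ t hτs,
      cycleType_inv _ (s0_inv n t h) t (s0_support n t h)]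
  rw [isConj_iff] at hc
  obtain ⟨g, hg⟩ := hc
  refine ⟨f.trans g, fun v => ?_⟩
  rw [← hg]
  simp [τ]

lemma adjust {X : Type*} [DecidableEq X] (s : Equiv.Perm X) (hs : ∀ x, s (s x) = x) (x y : X)
    (hxy : s x = x ↔ s y = y) : ∃ p : Equiv.Perm X, p x = y ∧ (∀ z, p (s z) = s (p z)) ∧
      ∀ z, z ≠ x → z ≠ s x → z ≠ y → z ≠ s y → p z = z := by
  have hinj : ∀ a b, s a = s b ↔ a = b := fun a b => s.injective.eq_iff
  by_cases hx : s x = x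
  · have hy := hxy.1 hx
    refine ⟨Equiv.swap x y, Equiv.swap_apply_left _ _, ?_, ?_⟩
    · intro z
      simp only [Equiv.swap_apply_def]
      grind
    · intro z h1 h2 h3 h4
      exact Equiv.swap_apply_of_ne_of_ne h1 h3
  · have hy : s y ≠ y := fun h => hx (hxy.2 h)
    by_cases h1 : x = y
    · exact ⟨1, by simpa using h1, by simp, by simp⟩
    · by_cases h2 : s x = y
      · refine ⟨Equiv.swap x y, Equiv.swap_apply_left _ _, ?_, ?_⟩
        · intro z
          simp only [Equiv.swap_apply_def]
          grind
        · intro z h1 h2 h3 h4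
          exact Equiv.swap_apply_of_ne_of_ne h1 h3
      · refine ⟨Equiv.swap x y * Equiv.swap (s x) (s y), ?_, ?_, ?_⟩
        · simp only [Equiv.Perm.mul_apply, Equiv.swap_apply_def]
          grind
        · intro z
          simp only [Equiv.Perm.mul_apply, Equiv.swap_apply_def]
          grind
        · intro z h1 h2 h3 h4
          simp only [Equiv.Perm.mul_apply, Equiv.swap_apply_def]
          grind

/-- extract the involution from a hub graph -/
lemma hub_inv {V : Type u} [Fintype V] [DecidableEq V] (G : SimpleGraph V) [DecidableRel G.Adj]
    (c p q : V) (hc : ∀ v, G.Adj c v ↔ v ≠ c ∧ v ≠ p)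
    (hpq : (p = c ∧ q = c) ∨ (p ≠ c ∧ q ≠ c ∧ p ≠ q ∧ G.Adj p q))
    (hdeg : ∀ v, v ≠ c → G.degree v ≤ 2 ∨ (v = q ∧ G.degree v ≤ 3)) :
    ∃ σ : Equiv.Perm V, (∀ x, σ (σ x) = x) ∧ σ c = c ∧
      (∀ u v, u ≠ v → (v = σ u ↔ (G.Adj u v ∧ u ≠ c ∧ v ≠ c ∧ ¬ (u = p ∧ v = q) ∧ ¬ (u = q ∧ v = p)))) ∧
      (∀ u v, G.Adj u v ↔ u ≠ v ∧ ((u = c ∧ v ≠ p) ∨ (v = c ∧ u ≠ p) ∨ v = σ u ∨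
        (u = p ∧ v = q) ∨ (u = q ∧ v = p))) := by
  classical
  let M : V → V → Prop := fun u v =>
    G.Adj u v ∧ u ≠ c ∧ v ≠ c ∧ ¬ (u = p ∧ v = q) ∧ ¬ (u = q ∧ v = p)
  have Msymm : ∀ u v, M u v → M v u := by
    rintro u v ⟨h1, h2, h3, h4, h5⟩
    exact ⟨h1.symm, h3, h2, fun h => h5 ⟨h.2, h.1⟩, fun h => h4 ⟨h.2, h.1⟩⟩
  have hcard : ∀ (u : V) (s : Finset V), (∀ v ∈ s, G.Adj u v) → s.card ≤ G.degree u := by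
    intro u s hs
    rw [← G.card_neighborFinset_eq_degree]
    exact Finset.card_le_card fun v hv => by simpa using hs v hv
  have Muniq : ∀ u v w, M u v → M u w → v = w := by
    rintro u v w ⟨h1, h2, h3, h4, h5⟩ ⟨k1, k2, k3, k4, k5⟩
    by_contra hvw
    by_cases hup : u = p
    · subst hup
      rcases hpq with h | ⟨q1, q2, q3, q4⟩
      · exact h2 h.1
      have hh := hcard u {q, v, w} (by simp [h1, k1, q4])
      rw [Finset.card_eq_three.2 ⟨q, v, w, fun h => h4 ⟨rfl, h.symm⟩, fun h => k4 ⟨rfl, h.symm⟩, hvw, rfl⟩] at hh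
      rcases hdeg u h2 with h | h
      · omega
      · exact q3 h.1
    · have huc : G.Adj u c := ((hc u).2 ⟨h2, hup⟩).symm
      by_cases huq : u = q
      · subst huq
        rcases hpq with h | ⟨q1, q2, q3, q4⟩
        · exact h2 h.2
        have hh := hcard u {c, p, v, w} (by simp [h1, k1, huc, q4.symm])
        have h5' : v ≠ p := fun h => h5 ⟨rfl, h⟩
        have k5' : w ≠ p := fun h => k5 ⟨rfl, h⟩
        rw [Finset.card_insert_of_notMem (by simp [q1.symm, h3.symm, k3.symm]),
          Finset.card_eq_three.2 ⟨p, v, w, h5'.symm, k5'.symm, hvw, rfl⟩] at hh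
        rcases hdeg u h2 with h | h <;> omega
      · have hh := hcard u {c, v, w} (by simp [h1, k1, huc])
        rw [Finset.card_eq_three.2 ⟨c, v, w, h3.symm, k3.symm, hvw, rfl⟩] at hh
        rcases hdeg u h2 with h | h
        · omega
        · exact huq h.1
  let f : V → V := fun u => if h : ∃ v, M u v then h.choose else u
  have hf1 : ∀ u v, M u v → f u = v := by
    intro u v h
    have h' : ∃ v, M u v := ⟨v, h⟩
    simp only [f, dif_pos h']
    exact Muniq _ _ _ h'.choose_spec h
  have hf2 : ∀ u, (¬ ∃ v, M u v) → f u = u := fun u h => by simp only [f, dif_neg h]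
  have hff : Function.Involutive f := by
    intro u
    by_cases h : ∃ v, M u v
    · obtain ⟨v, h⟩ := h
      rw [hf1 u v h, hf1 v u (Msymm _ _ h)]
    · rw [hf2 u h, hf2 u h]
  have hM : ∀ u v, u ≠ v → (v = f u ↔ M u v) := by
    intro u v huv
    constructor
    · intro h
      by_cases h' : ∃ v, M u v
      · obtain ⟨w, h'⟩ := h'
        rw [hf1 u w h'] at h
        rw [h]; exact h'
      · rw [hf2 u h'] at h
        exact absurd h.symm huv
    · intro h; exact (hf1 u v h).symm
  refine ⟨hff.toPerm f, hff, hf2 c (fun ⟨v, h⟩ => h.2.1 rfl), hM, ?_⟩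
  intro u v
  show _ ↔ u ≠ v ∧ ((u = c ∧ v ≠ p) ∨ (v = c ∧ u ≠ p) ∨ v = f u ∨
        (u = p ∧ v = q) ∨ (u = q ∧ v = p))
  constructor
  · intro h
    refine ⟨h.ne, ?_⟩
    by_cases h1 : u = c
    · left; subst h1; exact ⟨rfl, ((hc v).1 h).2⟩
    · by_cases h2 : v = c
      · right; left; subst h2; exact ⟨rfl, ((hc u).1 h.symm).2⟩
      · by_cases h3 : (u = p ∧ v = q) ∨ (u = q ∧ v = p)
        · right; right; right; exact h3
        · right; right; left
          rw [not_or] at h3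
          exact (hM u v h.ne).2 ⟨h, h1, h2, h3.1, h3.2⟩
  · rintro ⟨hne, ⟨rfl, h⟩ | ⟨rfl, h⟩ | h | ⟨rfl, rfl⟩ | ⟨rfl, rfl⟩⟩
    · exact (hc v).2 ⟨hne.symm, h⟩
    · exact ((hc u).2 ⟨hne, h⟩).symm
    · exact ((hM u v hne).1 h).1
    · rcases hpq with ⟨h1, h2⟩ | h
      · exact absurd (h1.trans h2.symm) hne
      · exact h.2.2.2
    · rcases hpq with ⟨h1, h2⟩ | h
      · exact absurd (h2.trans h1.symm) hne
      · exact h.2.2.2.symm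

lemma hub_count {V : Type u} [Fintype V] [DecidableEq V] (G : SimpleGraph V) [DecidableRel G.Adj]
    (c p q : V) (hpq : (p = c ∧ q = c) ∨ (p ≠ c ∧ q ≠ c ∧ p ≠ q)) (σ : Equiv.Perm V)
    (h1 : ∀ x, σ (σ x) = x) (h2 : σ c = c) (h3 : p ≠ q → σ p ≠ q)
    (h4 : ∀ u v, G.Adj u v ↔ u ≠ v ∧ ((u = c ∧ v ≠ p) ∨ (v = c ∧ u ≠ p) ∨ v = σ u ∨
        (u = p ∧ v = q) ∨ (u = q ∧ v = p))) (n t : ℕ) (hV : Fintype.card V = n)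
    (hsum : ∑ v, (G.degree v : ℤ) = 2 * (n - 1 + t)) : σ.support.card = 2 * t := by
  have hdeg : ∀ u, (G.degree u : ℤ) = ∑ v, if G.Adj u v then 1 else 0 := by
    intro u
    rw [← G.card_neighborFinset_eq_degree, G.neighborFinset_eq_filter]
    simp
  have hid : ∀ u v, (if G.Adj u v then 1 else 0 : ℤ) =
      (if u = c then (if v = c then 0 else 1) else 0) + (if v = c then (if u = c then 0 else 1) else 0)
      + (if v = σ u then (if σ u = u then 0 else 1) else 0)
      + ((if u = p then (if v = q then 1 else 0) else 0) - (if u = p then (if v = c then 1 else 0) else 0))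
      + ((if u = q then (if v = p then 1 else 0) else 0) - (if u = c then (if v = p then 1 else 0) else 0)) := by
    intro u v
    have hu := h1 u
    simp only [h4]
    rcases hpq with ⟨rfl, rfl⟩ | ⟨k1, k2, k3⟩
    · grind
    · have h5 := h3 k3
      have h6 := h1 p
      have h7 := h1 q
      grind
  have hsup : (σ.support.card : ℤ) = ∑ u, if σ u = u then 0 else 1 := by
    have : σ.support = univ.filter fun u => ¬ (σ u = u) := by ext; simp
    rw [this, Finset.card_filter]
    push_cast
    apply Finset.sum_congr rfl
    intro u _
    split_ifs <;> simp_all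
  have h01 : ∑ v : V, (if v = c then (0 : ℤ) else 1) = n - 1 := by
    have : ∀ v : V, (if v = c then (0 : ℤ) else 1) = 1 - if v = c then 1 else 0 := by
      intro v; split_ifs <;> simp
    simp only [this]
    rw [Finset.sum_sub_distrib]
    simp [hV]
  simp only [hdeg, hid, Finset.sum_add_distrib, Finset.sum_sub_distrib] at hsum
  have e1 : ∑ u : V, ∑ v : V, (if u = c then (if v = c then (0 : ℤ) else 1) else 0) = n - 1 := by
    rw [← h01, Finset.sum_comm]; simp
  have e2 : ∑ u : V, ∑ v : V, (if v = c then (if u = c then (0 : ℤ) else 1) else 0) = n - 1 := by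
    rw [← h01]; simp
  have e3 : ∑ u : V, ∑ v : V, (if v = σ u then (if σ u = u then (0 : ℤ) else 1) else 0) =
      σ.support.card := by
    rw [hsup]; simp
  have e4 : ∀ a b : V, ∑ u : V, ∑ v : V, (if u = a then (if v = b then (1 : ℤ) else 0) else 0) = 1 := by
    intro a b
    rw [Finset.sum_comm]; simp
  rw [e1, e2, e3, e4, e4, e4, e4] at hsum
  omega

end CactusDR

set_option linter.unusedSectionVars false
set_option linter.unusedVariables false

namespace CactusDR
universe u

def hubR (t p q x y : ℕ) : Prop := (x = 0 ∧ y ≠ p) ∨ (y = 0 ∧ x ≠ p) ∨ y = s0f t x ∨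
  (x = p ∧ y = q) ∨ (x = q ∧ y = p)

lemma G0_hub (n t : ℕ) (x y : Fin n) :
    (G0 n t).Adj x y ↔ x.val ≠ y.val ∧ hubR t 0 0 x.val y.val := by
  unfold G0 hubR s0f
  rw [SimpleGraph.fromRel_adj, ← Fin.val_ne_iff]
  simp only [Nat.odd_iff]
  split_ifs <;> omega

lemma G4_hub (n t : ℕ) (ht : 1 ≤ t) (x y : Fin n) :
    (G4g n t).Adj x y ↔ x.val ≠ y.val ∧ hubR t (2 * t + 1) 1 x.val y.val := by
  unfold G4g hubR s0f
  rw [SimpleGraph.fromRel_adj, ← Fin.val_ne_iff]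
  simp only [Nat.odd_iff]
  split_ifs <;> omega

lemma G5_hub (n t : ℕ) (ht : 1 ≤ t) (x y : Fin n) :
    (G5g n t).Adj x y ↔ x.val ≠ y.val ∧ hubR t (2 * t) (2 * t + 1) x.val y.val := by
  unfold G5g hubR s0f
  rw [SimpleGraph.fromRel_adj, ← Fin.val_ne_iff]
  simp only [Nat.odd_iff]
  split_ifs <;> omega

lemma hub_iso {V : Type u} (G : SimpleGraph V) (c p q : V) (σ : Equiv.Perm V)
    (h4 : ∀ u v, G.Adj u v ↔ u ≠ v ∧ ((u = c ∧ v ≠ p) ∨ (v = c ∧ u ≠ p) ∨ v = σ u ∨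
        (u = p ∧ v = q) ∨ (u = q ∧ v = p))) (n t : ℕ) (h : 2 * t + 1 ≤ n)
    (H : SimpleGraph (Fin n)) (p' q' : ℕ)
    (hH : ∀ x y : Fin n, H.Adj x y ↔ x.val ≠ y.val ∧ hubR t p' q' x.val y.val)
    (e : V ≃ Fin n) (he : ∀ v, e (σ v) = s0 n t h (e v)) (hc : (e c).val = 0)
    (hp : (e p).val = p') (hq : (e q).val = q') : Nonempty (G ≃g H) := by
  refine ⟨⟨e, ?_⟩⟩
  intro u v
  have key : ∀ a b : V, (e a).val = (e b).val ↔ a = b := fun a b => by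
    rw [← Fin.ext_iff]; exact e.injective.eq_iff
  rw [hH, h4]
  unfold hubR
  rw [← hc, ← hp, ← hq, ← s0_val n t h, ← he]
  simp only [ne_eq, key]

lemma exists_e0 {V : Type u} [Fintype V] [DecidableEq V] (n t : ℕ) (h : 2 * t + 1 ≤ n)
    (hV : Fintype.card V = n) (σ : Equiv.Perm V) (hσ : ∀ x, σ (σ x) = x)
    (hs : σ.support.card = 2 * t) (c : V) (hc : σ c = c) :
    ∃ e : V ≃ Fin n, (∀ v, e (σ v) = s0 n t h (e v)) ∧ (e c).val = 0 := by
  obtain ⟨e, he⟩ := exists_conj n t h hV σ hσ hs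
  obtain ⟨p, hp1, hp2, hp3⟩ := adjust (s0 n t h) (s0_inv n t h) (e c) ⟨0, by omega⟩ (by
    rw [← he, hc]
    simp [Fin.ext_iff, s0_val, s0f])
  refine ⟨e.trans p, fun v => ?_, ?_⟩
  · simp [he, hp2]
  · simp [hp1]

lemma exists_e1 {V : Type u} [Fintype V] [DecidableEq V] (n t : ℕ) (h : 2 * t + 1 ≤ n)
    (hV : Fintype.card V = n) (σ : Equiv.Perm V) (hσ : ∀ x, σ (σ x) = x)
    (hs : σ.support.card = 2 * t) (c d : V) (hc : σ c = c) (hd : σ d = d) (hcd : c ≠ d) :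
    ∃ e : V ≃ Fin n, (∀ v, e (σ v) = s0 n t h (e v)) ∧ (e c).val = 0 ∧ (e d).val = 2 * t + 1 := by
  obtain ⟨e, he, he0⟩ := exists_e0 n t h hV σ hσ hs c hc
  have hd0 : (e d).val ≠ 0 := by
    rw [← he0]; intro h'; exact hcd (e.injective (Fin.ext h')).symm
  have hdf : s0f t (e d).val = (e d).val := by
    rw [← s0_val n t h, ← he, hd]
  have hdt : 2 * t < (e d).val := by
    unfold s0f at hdf
    split_ifs at hdf <;> omega
  have hn : 2 * t + 1 < n := lt_of_le_of_lt hdt (e d).isLt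
  obtain ⟨p, hp1, hp2, hp3⟩ := adjust (s0 n t h) (s0_inv n t h) (e d) ⟨2 * t + 1, hn⟩ (by
    rw [← he, hd]
    simp [Fin.ext_iff, s0_val, s0f])
  refine ⟨e.trans p, fun v => ?_, ?_, ?_⟩
  · simp [he, hp2]
  · have h1 : (s0 n t h (e d)) = e d := Fin.ext hdf
    have h2 : (s0 n t h ⟨2 * t + 1, hn⟩) = ⟨2 * t + 1, hn⟩ := by
      simp [Fin.ext_iff, s0_val, s0f]
    rw [Equiv.trans_apply, hp3, he0]
    · intro h'; rw [Fin.ext_iff] at h'; omega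
    · rw [h1]; intro h'; rw [Fin.ext_iff] at h'; omega
    · intro h'; rw [Fin.ext_iff] at h'; simp at h'; omega
    · rw [h2]; intro h'; rw [Fin.ext_iff] at h'; simp at h'; omega
  · simp [hp1]

lemma exists_e2 {V : Type u} [Fintype V] [DecidableEq V] (n t : ℕ) (h : 2 * t + 1 ≤ n)
    (hV : Fintype.card V = n) (σ : Equiv.Perm V) (hσ : ∀ x, σ (σ x) = x)
    (hs : σ.support.card = 2 * t) (c d a : V) (hc : σ c = c) (hd : σ d = d) (hcd : c ≠ d)
    (ha : σ a ≠ a) (a' : ℕ) (ha1 : 1 ≤ a') (ha2 : a' ≤ 2 * t) :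
    ∃ e : V ≃ Fin n, (∀ v, e (σ v) = s0 n t h (e v)) ∧ (e c).val = 0 ∧ (e d).val = 2 * t + 1 ∧
      (e a).val = a' := by
  obtain ⟨e, he, he0, hed⟩ := exists_e1 n t h hV σ hσ hs c d hc hd hcd
  have hr : ∀ x : Fin n, s0 n t h x ≠ x → s0f t x.val ≠ x.val := fun x hx h' => hx (Fin.ext h')
  have hr2 : ∀ x : ℕ, s0f t x ≠ x → 1 ≤ x ∧ x ≤ 2 * t := by
    intro x hx
    unfold s0f at hx
    split_ifs at hx <;> omega
  have hr3 : ∀ x : ℕ, 1 ≤ x ∧ x ≤ 2 * t → s0f t x ≠ x := by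
    intro x hx
    unfold s0f
    split_ifs <;> omega
  have haf : s0 n t h (e a) ≠ e a := by
    rw [← he]; intro h'; exact ha (e.injective h')
  have ha'f : s0 n t h ⟨a', by omega⟩ ≠ ⟨a', by omega⟩ := by
    intro h'
    exact hr3 a' ⟨ha1, ha2⟩ (congrArg Fin.val h')
  obtain ⟨p, hp1, hp2, hp3⟩ := adjust (s0 n t h) (s0_inv n t h) (e a) ⟨a', by omega⟩ (by
    simp [haf, ha'f])
  have b1 := hr2 _ (hr _ haf)
  have haf' : s0 n t h (s0 n t h (e a)) ≠ s0 n t h (e a) := by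
    intro h'; exact haf ((s0 n t h).injective h')
  have ha'f' : s0 n t h (s0 n t h ⟨a', by omega⟩) ≠ s0 n t h ⟨a', by omega⟩ := by
    intro h'; exact ha'f ((s0 n t h).injective h')
  have b2 := hr2 _ (hr _ haf')
  have b3 := hr2 _ (hr _ ha'f')
  have fixd : ∀ x : Fin n, (x.val = 0 ∨ x.val = 2 * t + 1) → p x = x := by
    intro x hx
    apply hp3
    · rintro rfl; omega
    · rintro rfl; omega
    · rintro rfl; simp at hx; omega
    · rintro rfl; omega
  refine ⟨e.trans p, fun v => ?_, ?_, ?_, ?_⟩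
  · simp [he, hp2]
  · rw [Equiv.trans_apply, fixd _ (Or.inl he0), he0]
  · rw [Equiv.trans_apply, fixd _ (Or.inr hed), hed]
  · simp [hp1]

section
variable {V : Type u} [Fintype V] [DecidableEq V] (G : SimpleGraph V) [DecidableRel G.Adj]

lemma H0 (n t : ℕ) (h : 2 * t + 1 ≤ n) (hV : Fintype.card V = n)
    (hsum : ∑ v, (G.degree v : ℤ) = 2 * (n - 1 + t))
    (c : V) (hc : ∀ v, v ≠ c → G.Adj c v) (hdeg : ∀ v, v ≠ c → G.degree v ≤ 2) :
    Nonempty (G ≃g G0 n t) := by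
  obtain ⟨σ, h1, h2, h3, h4⟩ := hub_inv G c c c
    (fun v => ⟨fun h => ⟨h.ne', h.ne'⟩, fun h => hc v h.1⟩) (Or.inl ⟨rfl, rfl⟩)
    (fun v hv => Or.inl (hdeg v hv))
  have hs := hub_count G c c c (Or.inl ⟨rfl, rfl⟩) σ h1 h2 (fun h => absurd rfl h) h4 n t hV hsum
  obtain ⟨e, he, he0⟩ := exists_e0 n t h hV σ h1 hs c h2
  exact hub_iso G c c c σ h4 n t h _ 0 0 (G0_hub n t) e he he0 he0 he0

lemma H4 (n t : ℕ) (h : 2 * t + 1 ≤ n) (hV : Fintype.card V = n)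
    (hsum : ∑ v, (G.degree v : ℤ) = 2 * (n - 1 + t))
    (ht : 1 ≤ t) (c a d z : V) (hc : ∀ v, G.Adj c v ↔ v ≠ c ∧ v ≠ d) (hdc : d ≠ c) (hac : a ≠ c)
    (hda : d ≠ a) (hd : ∀ w, G.Adj d w ↔ w = a) (haz : G.Adj a z) (hzc : z ≠ c) (hzd : z ≠ d)
    (hdeg : ∀ v, v ≠ c → v ≠ a → G.degree v ≤ 2) (hdega : G.degree a ≤ 3) :
    Nonempty (G ≃g G4g n t) := by
  obtain ⟨σ, h1, h2, h3, h4⟩ := hub_inv G c d a hc (Or.inr ⟨hdc, hac, hda, (hd a).2 rfl⟩)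
    (fun v hv => by
      by_cases hva : v = a
      · right; exact ⟨hva, hva ▸ hdega⟩
      · exact Or.inl (hdeg v hv hva))
  have hσd : σ d = d := by
    by_contra hne
    have := ((h3 d (σ d) (Ne.symm hne)).1 rfl)
    exact this.2.2.2.1 ⟨rfl, (hd _).1 this.1⟩
  have hσa : σ a ≠ a := by
    have := (h3 a z haz.ne).2 ⟨haz, hac, hzc, fun h => hda h.1.symm, fun h => hzd h.2⟩
    rw [← this]; exact haz.ne'
  have hs := hub_count G c d a (Or.inr ⟨hdc, hac, hda⟩) σ h1 h2 (fun h => by rw [hσd]; exact h)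
    h4 n t hV hsum
  obtain ⟨e, he, he0, hed, hea⟩ := exists_e2 n t h hV σ h1 hs c d a h2 hσd hdc.symm hσa 1 le_rfl (by omega)
  exact hub_iso G c d a σ h4 n t h _ _ _ (G4_hub n t ht) e he he0 hed hea

lemma H5 (n t : ℕ) (h : 2 * t + 1 ≤ n) (hV : Fintype.card V = n)
    (hsum : ∑ v, (G.degree v : ℤ) = 2 * (n - 1 + t))
    (ht : 1 ≤ t) (c a b d : V) (hc : ∀ v, G.Adj c v ↔ v ≠ c ∧ v ≠ b) (hbc : b ≠ c)
    (had : a ≠ d) (hab : G.Adj a b) (hdb : G.Adj d b) (hac : a ≠ c) (hdc : d ≠ c)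
    (hdeg : ∀ v, v ≠ c → G.degree v ≤ 2) :
    Nonempty (G ≃g G5g n t) := by
  obtain ⟨σ, h1, h2, h3, h4⟩ := hub_inv G c b d hc (Or.inr ⟨hbc, hdc, hdb.ne', hdb.symm⟩)
    (fun v hv => Or.inl (hdeg v hv))
  have hσd : σ d = d := by
    by_contra hne
    obtain ⟨k1, k2, k3, k4, k5⟩ := ((h3 d (σ d) (Ne.symm hne)).1 rfl)
    have hb : σ d ≠ b := fun h => k5 ⟨rfl, h⟩
    have h6 : ({c, b, σ d} : Finset V).card ≤ G.degree d := by
      rw [← G.card_neighborFinset_eq_degree]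
      apply Finset.card_le_card
      intro v hv
      simp only [Finset.mem_insert, Finset.mem_singleton] at hv
      rw [SimpleGraph.mem_neighborFinset]
      rcases hv with rfl | rfl | rfl
      · exact ((hc d).2 ⟨hdc, hdb.ne⟩).symm
      · exact hdb
      · exact k1
    rw [Finset.card_eq_three.2 ⟨c, b, σ d, hbc.symm, k3.symm, hb.symm, rfl⟩] at h6
    have := hdeg d hdc
    omega
  have hσa : b = σ a :=
    (h3 a b hab.ne).2 ⟨hab, hac, hbc, fun h => hab.ne h.1, fun h => had h.1⟩
  have hσb : σ b = a := by rw [hσa, h1]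
  have hs := hub_count G c b d (Or.inr ⟨hbc, hdc, hdb.ne'⟩) σ h1 h2 (fun h => by rw [hσb]; exact had)
    h4 n t hV hsum
  obtain ⟨e, he, he0, hed, hea⟩ := exists_e2 n t h hV σ h1 hs c d b h2 hσd hdc.symm
    (by rw [hσb]; exact hab.ne) (2 * t) (by omega) le_rfl
  exact hub_iso G c b d σ h4 n t h _ _ _ (G5_hub n t ht) e he he0 hea hed

end

end CactusDR

set_option linter.unusedSectionVars false
set_option linter.unusedVariables false

namespace CactusDR
universe u w

lemma z4cases (k : ℕ) (hk : k = 4) (i j : ZMod k) (h : j ≠ i) : j = i + 1 ∨ j = i + 1 + 1 ∨ j = i - 1 := by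
  subst hk
  revert i j; decide

lemma z4ne (k : ℕ) (hk : k = 4) (i : ZMod k) : i + 1 + 1 ≠ i ∧ i + 1 + 1 ≠ i + 1 ∧ i + 1 + 1 ≠ i - 1 ∧
    i + 1 ≠ i ∧ i - 1 ≠ i ∧ i + 1 ≠ i - 1 ∧ i - 1 - 1 = i + 1 + 1 := by
  subst hk
  revert i; decide

lemma z23cases (k : ℕ) (h2 : 2 ≤ k) (hk : k ≤ 3) (i j : ZMod k) (h : i ≠ j) : j = i + 1 ∨ i = j + 1 := by
  have : k = 2 ∨ k = 3 := by omega
  rcases this with rfl | rfl <;> revert i j <;> decide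

lemma z3third (k : ℕ) (hk : k = 3) (i j : ZMod k) (h : i ≠ j) :
    ∃ z, z ≠ i ∧ z ≠ j ∧ ∀ m, m = i ∨ m = j ∨ m = z := by
  subst hk
  revert i j; decide

section
variable {V : Type u} [Fintype V] [DecidableEq V] {G : SimpleGraph V} [DecidableRel G.Adj]

lemma Blk.adj_small (b : Blk G) (hk : b.k ≤ 3) (i j : ZMod b.k) (h : i ≠ j) :
    G.Adj (b.s i) (b.s j) := by
  rcases z23cases b.k b.two_le hk i j h with rfl | rfl
  · exact b.adj i
  · exact (b.adj j).symm

lemma Blk.dB_le (b : Blk G) : b.dB ≤ 2 := by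
  unfold Blk.dB; split_ifs <;> norm_num

lemma Blk.leaf_deg_le (b : Blk G) (i : ZMod b.k) (h : b.N i = 1) : G.degree (b.s i) ≤ 2 := by
  have h1 := b.leaf_deg i h
  have h2 := b.dB_le
  have : (G.degree (b.s i) : ℝ) ≤ (2 : ℕ) := by rw [h1]; exact_mod_cast h2
  exact_mod_cast this

lemma Blk.next_ne (b : Blk G) (i : ZMod b.k) : i + 1 ≠ i := by
  intro h
  have := (b.adj i).ne
  rw [h] at this
  exact this rfl

variable {β : Type w} [Fintype β] {B : β → Blk G}

lemma leaf_only (hc : Cover B) (b b' : β) (j : ZMod (B b).k) (j' : ZMod (B b').k)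
    (hj : (B b).N j = 1) (h : (B b').s j' = (B b).s j) : b' = b := by
  have hadj := (B b').adj j'
  obtain ⟨b0, h0, h1⟩ := hc _ _ hadj
  have e1 : b' = b0 := by
    apply h1
    rw [(B b').πs, (B b').πs]
    exact ((B b').next_ne j').symm
  have e2 : b = b0 := by
    apply h1
    rw [h, (B b).πs]
    intro h2
    have := (B b).leaf_unique j hj _ h2.symm
    rw [this, h] at hadj
    exact hadj.ne rfl
  rw [e1, e2]

/-- leaf vertices -/
def Leaf (B : β → Blk G) (v : V) : Prop := ∃ b j, (B b).N j = 1 ∧ (B b).s j = v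

lemma card_leaf (hc : Cover B) [DecidablePred (Leaf B)] :
    (univ.filter (Leaf B)).card = ∑ b, (univ.filter fun j => (B b).N j = 1).card := by
  classical
  have : univ.filter (Leaf B) =
      univ.biUnion (fun b => (univ.filter fun j => (B b).N j = 1).image (B b).s) := by
    ext v
    simp [Leaf]
  rw [this, Finset.card_biUnion]
  · apply Finset.sum_congr rfl
    intro b _
    apply Finset.card_image_of_injective
    intro i j hij
    rw [← (B b).πs i, hij, (B b).πs]
  · intro b _ b' _ hbb'
    rw [Function.onFun, Finset.disjoint_left]
    intro v hv hv'
    simp only [Finset.mem_image, Finset.mem_filter, Finset.mem_univ, true_and] at hv hv'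
    obtain ⟨j, hj, rfl⟩ := hv
    obtain ⟨j', hj', h⟩ := hv'
    exact hbb' (leaf_only hc b b' j j' hj h).symm

lemma Dec.not_leaf {n t : ℕ} (hd : Dec B n t) (b : β) (i : ZMod (B b).k) (hi : (B b).N i ≠ 1) :
    ¬ Leaf B ((B b).s i) := by
  rintro ⟨b', j, hj, h⟩
  have := leaf_only hd.cov b' b j i hj h.symm
  subst this
  have h2 : j = i := by rw [← (B b).πs j, h, (B b).πs]
  rw [h2] at hj
  exact hi hj

/-- in a concentrated block the big vertex has more than one vertex in its fibre -/
lemma Dec.big {n t : ℕ} (hd : Dec B n t) (hn : 25 ≤ n) (b : β) (hk : (B b).k ≤ 4) (i : ZMod (B b).k)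
    (hi : ∀ j, j ≠ i → (B b).N j = 1) : (B b).N i ≠ 1 := by
  intro h
  have h1 := (B b).sum_N
  have h2 : ∀ j, (B b).N j = 1 := fun j => by
    by_cases hj : j = i
    · rw [hj, h]
    · exact hi j hj
  simp only [h2] at h1
  rw [hd.card] at h1
  simp [ZMod.card] at h1
  omega

lemma Dec.leaf_count {n t : ℕ} (hd : Dec B n t) (hn : 25 ≤ n) (b : β) (hk : (B b).k ≤ 4)
    (hc : Conc (B b).N) : (univ.filter fun j => (B b).N j = 1).card = (B b).k - 1 := by
  obtain ⟨i, hi⟩ := hc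
  have hb := hd.big hn b hk i hi
  have : (univ.filter fun j => (B b).N j = 1) = univ.erase i := by
    ext j
    simp only [Finset.mem_filter, Finset.mem_univ, true_and, Finset.mem_erase, and_true]
    exact ⟨fun h h' => hb (h' ▸ h), hi j⟩
  rw [this, Finset.card_erase_of_mem (Finset.mem_univ _), Finset.card_univ, ZMod.card]

lemma Dec.all_conc {n t : ℕ} (hd : Dec B n t) (hn : 25 ≤ n) (hk : ∀ b, (B b).k ≤ 4)
    (hc : ∀ b, Conc (B b).N) : ∃ c, ∀ v, ¬ Leaf B v ↔ v = c := by
  classical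
  have h1 := card_leaf hd.cov
  rw [Finset.sum_congr rfl (fun b _ => hd.leaf_count hn b (hk b) (hc b)), hd.sum_k_nat] at h1
  have h2 : (univ.filter fun v => ¬ Leaf B v).card = 1 := by
    have := Finset.card_filter_add_card_filter_not (s := (univ : Finset V)) (Leaf B)
    rw [h1, Finset.card_univ, hd.card] at this
    omega
  rw [Finset.card_eq_one] at h2
  obtain ⟨c, h2⟩ := h2
  refine ⟨c, fun v => ?_⟩
  have := Finset.ext_iff.1 h2 v
  simpa using this

lemma Dec.sum_deg_int {n t : ℕ} (hd : Dec B n t) : ∑ v, (G.degree v : ℤ) = 2 * (n - 1 + t) := by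
  have := hd.sum_deg
  have h2 : ((∑ v, (G.degree v : ℤ) : ℤ) : ℝ) = ((2 * (n - 1 + t) : ℤ) : ℝ) := by
    push_cast
    exact this
  exact_mod_cast h2

lemma Dec.leaf_le {n t : ℕ} (hd : Dec B n t) (v : V) (h : Leaf B v) : G.degree v ≤ 2 := by
  obtain ⟨b, j, hj, rfl⟩ := h
  exact (B b).leaf_deg_le j hj

lemma Dec.isG0 {n t : ℕ} (hd : Dec B n t) (hn : 25 ≤ n) (hk : ∀ b, (B b).k ≤ 3)
    (hc : ∀ b, Conc (B b).N) : Nonempty (G ≃g G0 n t) := by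
  obtain ⟨c, hL⟩ := hd.all_conc hn (fun b => (hk b).trans (by norm_num)) hc
  have hL' : ∀ v, v ≠ c → Leaf B v := fun v hv => by
    by_contra h; exact hv ((hL v).1 h)
  refine H0 G n t hd.two_t hd.card hd.sum_deg_int c ?_ (fun v hv => hd.leaf_le v (hL' v hv))
  intro v hv
  obtain ⟨b, j, hj, rfl⟩ := hL' v hv
  obtain ⟨i, hi⟩ := hc b
  have hb := hd.big hn b ((hk b).trans (by norm_num)) i hi
  have hci : (B b).s i = c := (hL _).1 (hd.not_leaf b i hb)
  rw [← hci]
  exact (B b).adj_small (hk b) i j (by rintro rfl; exact hb hj)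

lemma Dec.isG5 {n t : ℕ} (hd : Dec B n t) (hn : 25 ≤ n) (ht : 1 ≤ t) (b4 : β) (h4 : (B b4).k = 4)
    (hk : ∀ b, b ≠ b4 → (B b).k ≤ 3)
    (hc : ∀ b, Conc (B b).N) : Nonempty (G ≃g G5g n t) := by
  have hk4 : ∀ b, (B b).k ≤ 4 := fun b => by
    by_cases h : b = b4
    · rw [h, h4]
    · exact (hk b h).trans (by norm_num)
  obtain ⟨c, hL⟩ := hd.all_conc hn hk4 hc
  have hL' : ∀ v, v ≠ c → Leaf B v := fun v hv => by
    by_contra h; exact hv ((hL v).1 h)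
  obtain ⟨i, hi⟩ := hc b4
  have hb := hd.big hn b4 (hk4 b4) i hi
  have hci : (B b4).s i = c := (hL _).1 (hd.not_leaf b4 i hb)
  obtain ⟨z1, z2, z3, z4, z5, z6, z7⟩ := z4ne _ h4 i
  have sne : ∀ x y, x ≠ y → (B b4).s x ≠ (B b4).s y := by
    intro x y hxy h
    apply hxy
    rw [← (B b4).πs x, h, (B b4).πs]
  have adjm : ∀ x, G.Adj ((B b4).s x) ((B b4).s (x - 1)) := by
    intro x
    have := (B b4).adj (x - 1)
    rw [sub_add_cancel] at this
    exact this.symm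
  refine H5 G n t hd.two_t hd.card hd.sum_deg_int ht c ((B b4).s (i + 1)) ((B b4).s (i + 1 + 1))
    ((B b4).s (i - 1)) ?_ (by rw [← hci]; exact sne _ _ z1) (sne _ _ z6) ((B b4).adj _)
    (by rw [← z7]; exact adjm _) (by rw [← hci]; exact sne _ _ z4) (by rw [← hci]; exact sne _ _ z5)
    (fun v hv => hd.leaf_le v (hL' v hv))
  intro v
  constructor
  · intro h
    refine ⟨h.ne', ?_⟩
    rintro rfl
    rw [← hci] at h
    have := ((B b4).edge _ _ h (by rw [(B b4).πs, (B b4).πs]; exact z1.symm)).2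
    rw [(B b4).πs, (B b4).πs] at this
    rcases this with h | h
    · exact z2 h
    · exact z3 h
  · rintro ⟨hv, hvb⟩
    obtain ⟨b, j, hj, rfl⟩ := hL' v hv
    by_cases hbb : b = b4
    · subst hbb
      rw [← hci]
      rcases z4cases _ h4 i j (by rintro rfl; exact hb hj) with rfl | rfl | rfl
      · exact (B b).adj i
      · exact absurd rfl hvb
      · exact adjm i
    · obtain ⟨i', hi'⟩ := hc b
      have hb' := hd.big hn b (hk4 b) i' hi'
      have hci' : (B b).s i' = c := (hL _).1 (hd.not_leaf b i' hb')
      rw [← hci']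
      exact (B b).adj_small (hk b hbb) i' j (by rintro rfl; exact hb' hj)

lemma Dec.isG4 {n t : ℕ} (hd : Dec B n t) (hn : 25 ≤ n) (ht : 1 ≤ t) (b0 : β) (h3 : (B b0).k = 3)
    (h0 : ∃ i j, i ≠ j ∧ (B b0).N i = 1 ∧ (B b0).N j = 2)
    (hk : ∀ b, b ≠ b0 → (B b).k ≤ 3)
    (hc : ∀ b, b ≠ b0 → Conc (B b).N) : Nonempty (G ≃g G4g n t) := by
  classical
  obtain ⟨i, j, hij, hi, hj⟩ := h0
  obtain ⟨z, hzi, hzj, hall⟩ := z3third _ h3 i j hij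
  have huniv : (univ : Finset (ZMod (B b0).k)) = {i, j, z} := by
    ext m; simpa using hall m
  have hNz : (B b0).N z ≠ 1 := by
    have h1 := (B b0).sum_N
    rw [huniv, hd.card, Finset.sum_insert (by simp [hij, hzi.symm]), Finset.sum_pair hzj.symm, hi, hj] at h1
    omega
  have hcnt0 : (univ.filter fun m => (B b0).N m = 1).card = 1 := by
    rw [Finset.card_eq_one]
    refine ⟨i, ?_⟩
    ext m
    simp only [Finset.mem_filter, Finset.mem_univ, true_and, Finset.mem_singleton]
    constructor
    · intro h
      rcases hall m with rfl | rfl | rfl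
      · rfl
      · omega
      · exact absurd h hNz
    · rintro rfl; exact hi
  have hcard := card_leaf hd.cov
  have hsum := hd.sum_k_nat
  rw [← Finset.add_sum_erase _ _ (Finset.mem_univ b0)] at hcard hsum
  rw [Finset.sum_congr rfl (fun b hb => hd.leaf_count hn b ((hk b (Finset.ne_of_mem_erase hb)).trans (by norm_num))
    (hc b (Finset.ne_of_mem_erase hb))), hcnt0] at hcard
  rw [h3] at hsum
  have sne : ∀ x y, x ≠ y → (B b0).s x ≠ (B b0).s y := by
    intro x y hxy h
    apply hxy
    rw [← (B b0).πs x, h, (B b0).πs]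
  have hna := hd.not_leaf b0 j (by omega)
  have hnc := hd.not_leaf b0 z hNz
  have hL : ∀ v, ¬ Leaf B v → v = (B b0).s j ∨ v = (B b0).s z := by
    have h2 : (univ.filter fun v => ¬ Leaf B v).card = 2 := by
      have := Finset.card_filter_add_card_filter_not (s := (univ : Finset V)) (Leaf B)
      rw [Finset.card_univ, hd.card] at this
      omega
    have h5 : ({(B b0).s j, (B b0).s z} : Finset V) = univ.filter fun v => ¬ Leaf B v := by
      apply Finset.eq_of_subset_of_card_le
      · intro v hv
        simp only [Finset.mem_insert, Finset.mem_singleton] at hv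
        simp only [Finset.mem_filter, Finset.mem_univ, true_and]
        rcases hv with rfl | rfl <;> assumption
      · rw [h2, Finset.card_pair (sne _ _ hzj.symm)]
    intro v hv
    have : v ∈ univ.filter fun v => ¬ Leaf B v := by simp [hv]
    rw [← h5] at this
    simpa using this
  obtain ⟨d, d1, d2, d3, d4, d5, d6, d7⟩ := (B b0).two_fib hd.conn j hj
  have hdB : (B b0).dB = 2 := by unfold Blk.dB; rw [if_neg (by omega)]
  have dne : ∀ m, m ≠ j → d ≠ (B b0).s m := by
    rintro m hm rfl
    rw [(B b0).πs] at d2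
    exact hm d2
  refine H4 G n t hd.two_t hd.card hd.sum_deg_int ht ((B b0).s z) ((B b0).s j) d ((B b0).s i) ?_
    (dne z hzj) (sne _ _ hzj.symm) d1 d4 ((B b0).adj_small h3.le _ _ hij.symm) (sne _ _ hzi.symm) (dne i hij).symm
    ?_ ?_
  · intro v
    constructor
    · intro h
      refine ⟨h.ne', ?_⟩
      rintro rfl
      exact sne _ _ hzj ((d4 _).1 h.symm)
    · rintro ⟨hvc, hvd⟩
      by_cases hv : Leaf B v
      · obtain ⟨b, m, hm, rfl⟩ := hv
        by_cases hb : b = b0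
        · subst hb
          exact (B b).adj_small h3.le _ _ (by rintro rfl; exact hNz hm)
        · obtain ⟨i', hi'⟩ := hc b hb
          have hb' := hd.big hn b ((hk b hb).trans (by norm_num)) i' hi'
          have hne : i' ≠ m := by rintro rfl; exact hb' hm
          have hadj := (B b).adj_small (hk b hb) i' m hne
          rcases hL _ (hd.not_leaf b i' hb') with h | h
          · exfalso
            obtain ⟨b1, k1, k2⟩ := hd.cov _ _ hadj
            apply hb
            rw [k2 b (by show _ ≠ _; rw [(B b).πs, (B b).πs]; exact hne)]
            symm
            apply k2
            show _ ≠ _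
            rw [h, (B b0).πs]
            intro h'
            rcases d3 _ h'.symm with h'' | h''
            · rw [h''] at hadj; exact hadj.ne h
            · exact hvd h''
          · rw [← h]; exact hadj
      · rcases hL v hv with rfl | rfl
        · exact (B b0).adj_small h3.le _ _ hzj
        · exact absurd rfl hvc
  · intro v h1 h2
    apply hd.leaf_le
    by_contra h
    rcases hL v h with h | h
    · exact h2 h
    · exact h1 h
  · have : (G.degree ((B b0).s j) : ℝ) ≤ (3 : ℕ) := by rw [d6, hdB]; norm_num
    exact_mod_cast this

lemma Dec.main {n t : ℕ} (hd : Dec B n t) (hn : 25 ≤ n) (ht : 1 ≤ t) :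
    base n t + Del n t < degRes G ∨ Nonempty (G ≃g G0 n t) ∨ Nonempty (G ≃g G5g n t) ∨
      Nonempty (G ≃g G4g n t) := by
  classical
  have hexc := hd.exc hn ht
  have hn' : (25 : ℝ) ≤ n := by exact_mod_cast hn
  have ht' : (1 : ℝ) ≤ t := by exact_mod_cast ht
  have hDel : 0 < Del n t := by unfold Del; linarith
  have hdel : 0 < del4 n t := by unfold del4; linarith
  have hnn : ∀ b ∈ (univ : Finset β), 0 ≤ (B b).cost - baseK (B b).k n t := by
    intro b _
    rcases hexc b with ⟨_, _, h⟩ | ⟨_, _, h⟩ | ⟨_, _, h⟩ | h <;> linarith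
  have htot : ∑ b, ((B b).cost - baseK (B b).k n t) = degRes G - base n t := by
    rw [Finset.sum_sub_distrib, hd.sum_base, degRes_blk B hd.cov hd.conn]
  have hpair : ∀ b b' : β, b ≠ b' → ((B b).cost - baseK (B b).k n t) +
      ((B b').cost - baseK (B b').k n t) ≤ degRes G - base n t := by
    intro b b' hbb
    rw [← htot, ← Finset.sum_pair (f := fun x => (B x).cost - baseK (B x).k n t) hbb]
    exact Finset.sum_le_sum_of_subset_of_nonneg (Finset.subset_univ _) (fun x hx _ => hnn x hx)
  by_cases h1 : ∃ b, baseK (B b).k n t + Del n t < (B b).cost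
  · left
    obtain ⟨b, hb⟩ := h1
    have := Finset.single_le_sum hnn (Finset.mem_univ b)
    rw [htot] at this
    linarith
  have hexc' : ∀ b, ((B b).k ≤ 3 ∧ Conc (B b).N ∧ baseK (B b).k n t ≤ (B b).cost) ∨
    ((B b).k = 3 ∧ (∃ i j, i ≠ j ∧ (B b).N i = 1 ∧ (B b).N j = 2) ∧ baseK (B b).k n t + Del n t ≤ (B b).cost) ∨
    ((B b).k = 4 ∧ Conc (B b).N ∧ baseK (B b).k n t + del4 n t ≤ (B b).cost) := by
    intro b
    rcases hexc b with h | h | h | h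
    · exact Or.inl h
    · exact Or.inr (Or.inl h)
    · exact Or.inr (Or.inr h)
    · exact absurd ⟨b, h⟩ h1
  by_cases h2 : ∃ b0, (B b0).k = 3 ∧ (∃ i j, i ≠ j ∧ (B b0).N i = 1 ∧ (B b0).N j = 2) ∧
      baseK (B b0).k n t + Del n t ≤ (B b0).cost
  · obtain ⟨b0, k1, k2, k3⟩ := h2
    by_cases h3 : ∀ b, b ≠ b0 → (B b).k ≤ 3 ∧ Conc (B b).N
    · right; right; right
      exact hd.isG4 hn ht b0 k1 k2 (fun b hb => (h3 b hb).1) (fun b hb => (h3 b hb).2)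
    · left
      push Not at h3
      obtain ⟨b, hb, hb2⟩ := h3
      have hp := hpair b b0 hb
      rcases hexc' b with ⟨q1, q2, q3⟩ | ⟨q1, q2, q3⟩ | ⟨q1, q2, q3⟩
      · exact absurd q2 (hb2 q1)
      · linarith
      · linarith
  have hexc2 : ∀ b, ((B b).k ≤ 3 ∧ Conc (B b).N) ∨
    ((B b).k = 4 ∧ Conc (B b).N ∧ baseK (B b).k n t + del4 n t ≤ (B b).cost) := by
    intro b
    rcases hexc' b with h | h | h
    · exact Or.inl ⟨h.1, h.2.1⟩
    · exact absurd ⟨b, h⟩ h2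
    · exact Or.inr h
  have hconc : ∀ b, Conc (B b).N := fun b => by
    rcases hexc2 b with h | h
    · exact h.2
    · exact h.2.1
  by_cases h3 : ∃ b4, (B b4).k = 4 ∧ baseK (B b4).k n t + del4 n t ≤ (B b4).cost
  · obtain ⟨b4, k1, k2⟩ := h3
    by_cases h5 : ∀ b, b ≠ b4 → (B b).k ≤ 3
    · right; right; left
      exact hd.isG5 hn ht b4 k1 h5 hconc
    · left
      push Not at h5
      obtain ⟨b, hb, hb2⟩ := h5
      have hp := hpair b b4 hb
      rcases hexc2 b with h | ⟨q1, q2, q3⟩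
      · omega
      have hnt : 2 * t + 3 ≤ n := by
        have hs := hd.sum_k_nat
        have hcyc := hd.cyc
        rw [Finset.card_filter] at hcyc
        have hle : ∑ x, (2 * (if (B x).k ≠ 2 then 1 else 0) + (if x = b then 1 else 0) + (if x = b4 then 1 else 0))
            ≤ ∑ x, ((B x).k - 1) := by
          apply Finset.sum_le_sum
          intro x _
          have := (B x).two_le
          by_cases hx : x = b
          · rw [if_neg (show ¬ x = b4 by rw [hx]; exact hb), if_pos hx, hx, q1]; norm_num
          · by_cases hx' : x = b4
            · rw [if_neg hx, if_pos hx', hx', k1]; norm_num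
            · rw [if_neg hx, if_neg hx']
              split_ifs <;> omega
        rw [Finset.sum_add_distrib, Finset.sum_add_distrib, ← Finset.mul_sum, hcyc, hs] at hle
        simp at hle
        omega
      have hnt' : 2 * (t : ℝ) + 3 ≤ n := by exact_mod_cast hnt
      have : Del n t < del4 n t + del4 n t := by
        unfold Del del4; linarith
      linarith
  · right; left
    refine hd.isG0 hn (fun b => ?_) hconc
    rcases hexc2 b with h | h
    · exact h.1
    · exact absurd ⟨b, h.1, h.2.2⟩ h3

end

end CactusDR

/-- Theorem 5.1: among all graphs in `Cact(n;t)` with `n ≥ 25`, `t ≥ 1`, the cactus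
with the third-minimum degree resistance distance is `G4`. -/
theorem stmt_18 (n t : ℕ) (hn : 25 ≤ n) (ht : 1 ≤ t)
    {V : Type*} [Finite V] (G : SimpleGraph V) (hG : MemCact n t G)
    (hnot0 : ¬ Nonempty (G ≃g G0 n t)) (hnot5 : ¬ Nonempty (G ≃g G5g n t)) :
    degRes (G4g n t) ≤ degRes G ∧
    (degRes G = degRes (G4g n t) ↔ Nonempty (G ≃g G4g n t)) := by
  classical
  let _ := Fintype.ofFinite V
  obtain ⟨β, _, B, hd⟩ := CactusDR.exists_dec hG
  have hle := CactusDR.degRes_G4g_le hn hd.two_t ht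
  rcases hd.main hn ht with h | h | h | ⟨⟨e⟩⟩
  · refine ⟨by linarith, fun h' => by linarith, ?_⟩
    rintro ⟨e⟩
    exact CactusDR.degRes_iso e
  · exact absurd h hnot0
  · exact absurd h hnot5
  · have := CactusDR.degRes_iso e
    exact ⟨this.ge, fun _ => ⟨e⟩, fun _ => this⟩
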